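/- In the uniform case p_1 = … = p_A = 1/A with ρ = 1 + log_A M > 1, for every integer m ≥ 0 the m-th central moment of the size S_n of a random G-trie built from n labelings satisfies E[(S_n - E(S_n))^m] = g_m · Var(S_n)^{m/2} + o(n^{mρ/2}) as n → ∞, where g_m is the m-th moment of the standard normal distribution (g_m = m!/(2^{m/2}(m/2)!) for even m and g_m = 0 for odd m). -/

import Mathlib

open MeasureTheory ProbabilityTheory Filter Topology

/-- A word `w` over `{1,…,M}×{1,…,A}` occurs in the labeling `L` of the infinite rooted
`M`-ary tree (nodes are identified with words over `Fin M`; the value of `L` on the root `[]`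
is irrelevant) if along the path determined by the first components the labels are the
second components. -/
def Occurs {M A : ℕ} (L : List (Fin M) → Fin A) (w : List (Fin M × Fin A)) : Prop :=
  ∀ t : Fin w.length, L ((w.take (t.1 + 1)).map Prod.fst) = (w.get t).2

/-- The number of labelings among `Ls` in which the word `w` occurs. -/
noncomputable def occCount {M A n : ℕ} (Ls : Fin n → List (Fin M) → Fin A)
    (w : List (Fin M × Fin A)) : ℕ :=
  Nat.card {i : Fin n // Occurs (Ls i) w}

/-- The G-trie built from the labelings `Ls`: all words occurring in at least two of them. -/
def GTrie {M A n : ℕ} (Ls : Fin n → List (Fin M) → Fin A) : Set (List (Fin M × Fin A)) :=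
  {w | 2 ≤ occCount Ls w}

/-- The size of the G-trie built from the labelings `Ls` (as a real number). -/
noncomputable def gtrieSize {M A n : ℕ} (Ls : Fin n → List (Fin M) → Fin A) : ℝ :=
  (GTrie Ls).ncard

/-- `μL` is the distribution of a random labeling of the infinite rooted `M`-ary tree where
all labels are independent with `P(letter = j) = p j`: every finite cylinder set has the
product probability. -/
def IsLabelingMeasure {M A : ℕ} (p : Fin A → ℝ) (μL : Measure (List (Fin M) → Fin A)) : Prop :=
  ∀ (s : Finset (List (Fin M))) (f : List (Fin M) → Fin A),
    μL {L | ∀ w ∈ s, L w = f w} = ∏ w ∈ s, ENNReal.ofReal (p (f w))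

/-- `g_m`, the `m`-th moment of the standard normal distribution. -/
noncomputable def gaussianMoment (m : ℕ) : ℝ :=
  if Even m then (m.factorial : ℝ) / (2 ^ (m / 2) * ((m / 2).factorial : ℝ)) else 0


namespace GT

/-- binomial averaging operator -/
noncomputable def Bn (q : ℝ) : ℕ → (ℕ → ℝ) → ℝ
  | 0, f => f 0
  | n + 1, f => q * Bn q n (fun k => f (k + 1)) + (1 - q) * Bn q n f

lemma Bn_add (q : ℝ) (n : ℕ) (f g : ℕ → ℝ) :
    Bn q n (fun k => f k + g k) = Bn q n f + Bn q n g := by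
  induction n generalizing f g with
  | zero => simp [Bn]
  | succ n ih => simp only [Bn, ih]; ring

lemma Bn_mul (q : ℝ) (n : ℕ) (c : ℝ) (f : ℕ → ℝ) :
    Bn q n (fun k => c * f k) = c * Bn q n f := by
  induction n generalizing f with
  | zero => simp [Bn]
  | succ n ih => simp only [Bn, ih]; ring

lemma Bn_sub (q : ℝ) (n : ℕ) (f g : ℕ → ℝ) :
    Bn q n (fun k => f k - g k) = Bn q n f - Bn q n g := by
  induction n generalizing f g with
  | zero => simp [Bn]
  | succ n ih => simp only [Bn, ih]; ring

lemma Bn_const (q : ℝ) (n : ℕ) (c : ℝ) : Bn q n (fun _ => c) = c := by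
  induction n with
  | zero => simp [Bn]
  | succ n ih => simp only [Bn, ih]; ring

lemma Bn_mono {q : ℝ} (h0 : 0 ≤ q) (h1 : q ≤ 1) (n : ℕ) (f g : ℕ → ℝ)
    (h : ∀ k ≤ n, f k ≤ g k) : Bn q n f ≤ Bn q n g := by
  induction n generalizing f g with
  | zero => exact h 0 le_rfl
  | succ n ih =>
    simp only [Bn]
    have a := ih (fun k => f (k+1)) (fun k => g (k+1)) (fun k hk => h _ (by omega))
    have b := ih f g (fun k hk => h _ (by omega))
    have : 0 ≤ 1 - q := by linarith
    gcongr

lemma Bn_abs {q : ℝ} (h0 : 0 ≤ q) (h1 : q ≤ 1) (n : ℕ) (f : ℕ → ℝ) :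
    |Bn q n f| ≤ Bn q n (fun k => |f k|) := by
  rw [abs_le]
  constructor
  · have := Bn_mono h0 h1 n (fun k => (-1) * |f k|) f (fun k _ => by
      have := neg_abs_le (f k); linarith)
    rw [Bn_mul] at this; linarith
  · exact Bn_mono h0 h1 n _ _ (fun k _ => le_abs_self _)

lemma Bn_nonneg {q : ℝ} (h0 : 0 ≤ q) (h1 : q ≤ 1) (n : ℕ) (f : ℕ → ℝ)
    (h : ∀ k ≤ n, 0 ≤ f k) : 0 ≤ Bn q n f := by
  have := Bn_mono h0 h1 n (fun _ => 0) f h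
  rwa [Bn_const] at this

lemma Bn_diff (q : ℝ) (n : ℕ) (f : ℕ → ℝ) :
    Bn q (n+1) f - Bn q n f = q * Bn q n (fun k => f (k+1) - f k) := by
  rw [Bn_sub]; simp only [Bn]; ring

lemma Bn_sizebias (q : ℝ) (n : ℕ) (f : ℕ → ℝ) :
    Bn q (n+1) (fun k => k * f k) = (n+1) * q * Bn q n (fun k => f (k+1)) := by
  induction n generalizing f with
  | zero => simp [Bn]
  | succ n ih =>
    have e1 : Bn q (n+1+1) (fun k => k * f k) = q * Bn q (n+1) (fun k => ((k+1:ℕ):ℝ) * f (k+1))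
      + (1-q) * Bn q (n+1) (fun k => k * f k) := rfl
    have e2 : Bn q (n+1) (fun k => ((k+1:ℕ):ℝ) * f (k+1))
        = Bn q (n+1) (fun k => f (k+1)) + Bn q (n+1) (fun k => k * f (k+1)) := by
      rw [← Bn_add]; congr 1; ext k; push_cast; ring
    rw [e1, e2, ih (fun k => f (k+1)), ih f]
    simp only [Bn]
    push_cast; ring

lemma Bn_id (q : ℝ) (n : ℕ) : Bn q n (fun k => (k:ℝ)) = n * q := by
  cases n with
  | zero => simp [Bn]
  | succ n =>
    have := Bn_sizebias q n (fun _ => 1)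
    simp only [mul_one, Bn_const] at this
    rw [this]; push_cast; ring

lemma Bn_sq (q : ℝ) (n : ℕ) : Bn q n (fun k => (k:ℝ)^2) = n * q + n * (n-1) * q^2 := by
  cases n with
  | zero => simp [Bn]
  | succ n =>
    have := Bn_sizebias q n (fun k => (k:ℝ))
    have e : Bn q n (fun k => ((k+1:ℕ):ℝ)) = n * q + 1 := by
      push_cast; rw [Bn_add, Bn_id, Bn_const]
    rw [e] at this
    simp only [sq]
    rw [this]; push_cast; ring

lemma Bn_fact2 (q : ℝ) (n : ℕ) : Bn q n (fun k => (k:ℝ)*(k-1)) = n * (n-1) * q^2 := by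
  have : (fun k : ℕ => (k:ℝ)*(k-1)) = fun k : ℕ => (k:ℝ)^2 - k := by ext; ring
  rw [this, Bn_sub, Bn_sq, Bn_id]; ring

lemma Bn_var (q : ℝ) (n : ℕ) : Bn q n (fun k => ((k:ℝ) - n*q)^2) = n * q * (1-q) := by
  have : (fun k : ℕ => ((k:ℝ) - n*q)^2) = fun k : ℕ => ((k:ℝ)^2 - (2*n*q) * k) + (n*q)^2 := by
    ext; ring
  rw [this, Bn_add, Bn_sub, Bn_mul, Bn_sq, Bn_id, Bn_const]; ring

lemma Bn_pow (q x : ℝ) (n : ℕ) : Bn q n (fun k => x^k) = (q * x + (1-q))^n := by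
  induction n with
  | zero => simp [Bn]
  | succ n ih =>
    have : (fun k : ℕ => x^(k+1)) = fun k : ℕ => x * x^k := by ext; ring
    simp only [Bn, this, Bn_mul, ih]; ring

/-- score identity -/
lemma Bn_score (q : ℝ) (hq : q < 1) (n : ℕ) (f : ℕ → ℝ) :
    Bn q (n+1) f - Bn q n f
      = Bn q (n+1) (fun k => ((k:ℝ) - (n+1)*q) * f k) / ((n+1)*(1-q)) := by
  have h1 : (n:ℝ)+1 ≠ 0 := by positivity
  have h2 : 1 - q ≠ 0 := by linarith
  have e : (fun k : ℕ => ((k:ℝ) - (n+1)*q) * f k) = fun k : ℕ => k * f k - ((n+1)*q) * f k := by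
    ext; ring
  rw [e, Bn_sub, Bn_mul, Bn_sizebias]
  have e3 : Bn q (n+1) f = q * Bn q n (fun k => f (k + 1)) + (1 - q) * Bn q n f := rfl
  rw [eq_div_iff (by positivity), e3]; ring

/-- Jensen type: concave -/
lemma Bn_rpow_le {q : ℝ} (h0 : 0 ≤ q) (h1 : q ≤ 1) (n : ℕ) (f : ℕ → ℝ) (hf : ∀ k, 0 ≤ f k)
    (s : ℝ) (hs0 : 0 ≤ s) (hs1 : s ≤ 1) : Bn q n (fun k => f k ^ s) ≤ (Bn q n f) ^ s := by
  induction n generalizing f with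
  | zero => simp [Bn]
  | succ n ih =>
    have hq : 0 ≤ 1 - q := by linarith
    have c := (Real.concaveOn_rpow hs0 hs1).2
      (x := Bn q n (fun k => f (k+1))) (y := Bn q n f)
      (Bn_nonneg h0 h1 _ _ fun k _ => hf _) (Bn_nonneg h0 h1 _ _ fun k _ => hf _) h0 hq (by ring)
    simp only [smul_eq_mul] at c
    simp only [Bn]
    refine le_trans ?_ c
    have a := ih (fun k => f (k+1)) (fun k => hf _)
    have b := ih f hf
    gcongr

lemma le_Bn_rpow {q : ℝ} (h0 : 0 ≤ q) (h1 : q ≤ 1) (n : ℕ) (f : ℕ → ℝ) (hf : ∀ k, 0 ≤ f k)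
    (s : ℝ) (hs1 : 1 ≤ s) : (Bn q n f) ^ s ≤ Bn q n (fun k => f k ^ s) := by
  induction n generalizing f with
  | zero => simp [Bn]
  | succ n ih =>
    have hq : 0 ≤ 1 - q := by linarith
    have c := (convexOn_rpow hs1).2
      (x := Bn q n (fun k => f (k+1))) (y := Bn q n f)
      (Bn_nonneg h0 h1 _ _ fun k _ => hf _) (Bn_nonneg h0 h1 _ _ fun k _ => hf _) h0 hq (by ring)
    simp only [smul_eq_mul] at c
    simp only [Bn]
    refine le_trans c ?_
    have a := ih (fun k => f (k+1)) (fun k => hf _)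
    have b := ih f hf
    gcongr

lemma Bn_expmom {q : ℝ} (h0 : 0 ≤ q) (h1 : q ≤ 1) (n : ℕ) (h : ℝ) (hh : |h| ≤ 1)
    (hn : n * h^2 ≤ 1) : Bn q n (fun k => Real.exp (h * ((k:ℝ) - n*q))) ≤ Real.exp 1 := by
  have e : (fun k : ℕ => Real.exp (h * ((k:ℝ) - n*q)))
      = fun k : ℕ => Real.exp (-(h*(n*q))) * (Real.exp h)^k := by
    ext k; rw [← Real.exp_nat_mul, ← Real.exp_add]; ring_nf
  rw [e, Bn_mul, Bn_pow]
  have k1 : q * Real.exp h + (1-q) ≤ Real.exp (q * (Real.exp h - 1)) := by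
    have := Real.add_one_le_exp (q * (Real.exp h - 1)); linarith
  have k0 : 0 ≤ q * Real.exp h + (1-q) := by
    have : 0 ≤ 1 - q := by linarith
    positivity
  calc _ ≤ Real.exp (-(h*(n*q))) * (Real.exp (q * (Real.exp h - 1)))^n := by gcongr
    _ = Real.exp (n * q * (Real.exp h - 1 - h)) := by
      rw [← Real.exp_nat_mul, ← Real.exp_add]; ring_nf
    _ ≤ Real.exp 1 := by
      apply Real.exp_le_exp.2
      have := (abs_le.1 (Real.abs_exp_sub_one_sub_id_le hh)).2
      calc n * q * (Real.exp h - 1 - h) ≤ n * q * h^2 := by gcongr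
        _ = q * (n * h^2) := by ring
        _ ≤ 1 * 1 := by
          apply mul_le_mul h1 hn (by positivity) (by norm_num)
        _ = 1 := by ring

lemma pow_le_exp (y : ℝ) (i : ℕ) :
    y^(2*i) ≤ (2*i).factorial * (Real.exp y + Real.exp (-y)) := by
  have h := Real.pow_div_factorial_le_exp (|y|) (abs_nonneg y) (2*i)
  rw [div_le_iff₀ (by positivity)] at h
  have e : |y|^(2*i) = y^(2*i) := by rw [pow_mul, pow_mul, sq_abs]
  rw [e] at h
  have : Real.exp |y| ≤ Real.exp y + Real.exp (-y) := by
    rcases abs_choice y with h | h <;> rw [h] <;> linarith [Real.exp_pos y, Real.exp_pos (-y)]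
  nlinarith [show (0:ℝ) < (2*i).factorial by positivity]

lemma Bn_zeta (A : ℕ) (hA : 2 ≤ A) (i n : ℕ) :
    Bn (1/(A:ℝ)) n (fun k => (((k:ℝ) - (n / A : ℕ))^2/(n+1))^i)
      ≤ (2*i).factorial * (2 * Real.exp 1 * Real.exp 1) := by
  have hA' : (0:ℝ) < A := by positivity
  set q : ℝ := 1/(A:ℝ) with hq
  have h0 : 0 ≤ q := by positivity
  have h1 : q ≤ 1 := by
    rw [hq, div_le_one hA']; exact_mod_cast (by omega : 1 ≤ A)
  set τ : ℝ := Real.sqrt (n+1) with hτ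
  have hτ2 : τ^2 = n+1 := Real.sq_sqrt (by positivity)
  have hτ1 : 1 ≤ τ := by
    rw [hτ, Real.one_le_sqrt]; linarith [show (0:ℝ) ≤ n by positivity]
  set h : ℝ := 1/τ with hh
  have hpos : 0 < h := by positivity
  have hle : h ≤ 1 := by rw [hh, div_le_one (by positivity)]; exact hτ1
  have hn : n * h^2 ≤ 1 := by
    rw [hh, div_pow, one_pow, hτ2, mul_one_div, div_le_one (by positivity)]; linarith
  -- floor
  have f1 : ((n / A : ℕ):ℝ) ≤ n * q := by
    rw [hq, mul_one_div]; exact Nat.cast_div_le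
  have f2 : (n:ℝ) * q ≤ (n / A : ℕ) + 1 := by
    rw [hq, mul_one_div, div_le_iff₀ hA']
    have := Nat.lt_div_mul_add (a := n) (b := A) (by omega)
    have h3 : (n:ℝ) < (n / A : ℕ) * A + A := by exact_mod_cast this
    linarith
  have key : ∀ k ≤ n, (((k:ℝ) - (n / A : ℕ))^2/(n+1))^i ≤ (2*i).factorial *
      (Real.exp 1 * (Real.exp (h * ((k:ℝ) - n*q)) + Real.exp ((-h) * ((k:ℝ) - n*q)))) := by
    intro k _
    have e : (((k:ℝ) - (n / A : ℕ))^2/(n+1))^i = (h * ((k:ℝ) - (n / A : ℕ)))^(2*i) := by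
      rw [pow_mul, ← hτ2, hh]; congr 1; field_simp
    rw [e]
    refine (pow_le_exp _ i).trans ?_
    have a1 : Real.exp (h * ((k:ℝ) - (n / A : ℕ))) ≤ Real.exp 1 * Real.exp (h * ((k:ℝ) - n*q)) := by
      rw [← Real.exp_add]; apply Real.exp_le_exp.2; nlinarith
    have a2 : Real.exp (-(h * ((k:ℝ) - (n / A : ℕ)))) ≤
        Real.exp 1 * Real.exp ((-h) * ((k:ℝ) - n*q)) := by
      rw [← Real.exp_add]; apply Real.exp_le_exp.2; nlinarith
    gcongr
    linarith
  refine (Bn_mono h0 h1 n _ _ key).trans ?_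
  rw [Bn_mul, Bn_mul, Bn_add]
  have b1 := Bn_expmom h0 h1 n h (by rw [abs_of_pos hpos]; exact hle) hn
  have b2 := Bn_expmom h0 h1 n (-h) (by rw [abs_neg, abs_of_pos hpos]; exact hle)
    (by rw [neg_sq]; exact hn)
  have : 2 * Real.exp 1 * Real.exp 1 = Real.exp 1 * (Real.exp 1 + Real.exp 1) := by ring
  rw [this]
  gcongr

end GT


namespace GT

lemma Bn_phi {q : ℝ} (h0 : 0 < q) (h1 : q ≤ 1) (s : ℝ) (hs : -1 < s) (θ : ℝ) (hθ : q^s < θ) :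
    ∀ᶠ n : ℕ in atTop, Bn q n (fun k => ((k:ℝ)+1)^s) ≤ θ * ((n:ℝ)+1)^s := by
  obtain ⟨θ1, hθ1, hθ2⟩ := exists_between hθ
  have hcont : ContinuousAt (fun x : ℝ => x^s) q :=
    Real.continuousAt_rpow_const _ _ (Or.inl h0.ne')
  have hev : ∀ᶠ x in 𝓝 q, x^s < θ1 := hcont.eventually (gt_mem_nhds hθ1)
  obtain ⟨ε, hε, hball⟩ := Metric.eventually_nhds_iff.1 hev
  have t1 : Tendsto (fun n : ℕ => ((n:ℝ)+1)) atTop atTop :=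
    tendsto_atTop_add_const_right _ _ tendsto_natCast_atTop_atTop
  have lim : Tendsto (fun n : ℕ => (((n:ℝ)+1)^(-(s+1)) + ((n:ℝ)+1)^(-(1:ℝ))) * (4/ε^2))
      atTop (𝓝 ((0+0)*(4/ε^2))) := by
    apply Tendsto.mul_const
    apply Tendsto.add
    · exact (tendsto_rpow_neg_atTop (by linarith)).comp t1
    · exact (tendsto_rpow_neg_atTop (by norm_num)).comp t1
  have ev1 := lim.eventually (gt_mem_nhds (show (0+0)*(4/ε^2) < θ - θ1 by simp; linarith))
  have ev2 := t1.eventually (eventually_ge_atTop (2/ε))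
  filter_upwards [ev1, ev2] with n hn1 hn2
  have hN : (0:ℝ) < (n:ℝ)+1 := by positivity
  have hP : (0:ℝ) < ((n:ℝ)+1)^s := by positivity
  have key : ∀ k ≤ n, ((k:ℝ)+1)^s ≤ θ1 * ((n:ℝ)+1)^s +
      ((1+((n:ℝ)+1)^s) * (4/(((n:ℝ)+1)^2*ε^2))) * ((k:ℝ) - n*q)^2 := by
    intro k hk
    have hk' : (k:ℝ) ≤ n := by exact_mod_cast hk
    have hk0 : (0:ℝ) ≤ k := by positivity
    by_cases hx : |((k:ℝ)+1)/((n:ℝ)+1) - q| < ε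
    · have := hball (y := ((k:ℝ)+1)/((n:ℝ)+1)) (by rw [Real.dist_eq]; exact hx)
      rw [Real.div_rpow (by positivity) (by positivity), div_lt_iff₀ hP] at this
      have : 0 ≤ ((1+((n:ℝ)+1)^s) * (4/(((n:ℝ)+1)^2*ε^2))) * ((k:ℝ) - n*q)^2 := by positivity
      linarith
    · push Not at hx
      have a : ε * ((n:ℝ)+1) ≤ |((k:ℝ)+1) - q*((n:ℝ)+1)| := by
        have : ((k:ℝ)+1)/((n:ℝ)+1) - q = (((k:ℝ)+1) - q*((n:ℝ)+1))/((n:ℝ)+1) := by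
          field_simp
        rwa [this, abs_div, abs_of_pos hN, le_div_iff₀ hN] at hx
      have b : |((k:ℝ)+1) - q*((n:ℝ)+1)| ≤ |(k:ℝ) - n*q| + 1 := by
        have e : ((k:ℝ)+1) - q*((n:ℝ)+1) = ((k:ℝ) - n*q) + (1-q) := by ring
        rw [e]
        refine (abs_add_le _ _).trans ?_
        have : |1-q| ≤ 1 := by rw [abs_le]; constructor <;> linarith
        linarith
      have c : 1 ≤ ε * ((n:ℝ)+1)/2 := by
        rw [div_le_iff₀ hε] at hn2; linarith
      have d : ε * ((n:ℝ)+1)/2 ≤ |(k:ℝ) - n*q| := by linarith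
      have e : (ε * ((n:ℝ)+1)/2)^2 ≤ ((k:ℝ) - n*q)^2 := by
        rw [← sq_abs ((k:ℝ) - n*q)]; gcongr
      have f : 1 ≤ (4/(((n:ℝ)+1)^2*ε^2)) * ((k:ℝ) - n*q)^2 := by
        rw [div_mul_eq_mul_div, one_le_div (by positivity)]; nlinarith
      have g : ((k:ℝ)+1)^s ≤ 1+((n:ℝ)+1)^s := by
        rcases le_total 0 s with h | h
        · have : ((k:ℝ)+1)^s ≤ ((n:ℝ)+1)^s := by gcongr
          linarith
        · have := Real.rpow_le_one_of_one_le_of_nonpos (x := (k:ℝ)+1) (by linarith) h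
          linarith
      have : 0 ≤ θ1 * ((n:ℝ)+1)^s := by
        have : 0 < q^s := by positivity
        have : 0 < θ1 := by linarith
        positivity
      have : (1+((n:ℝ)+1)^s) * 1 ≤ (1+((n:ℝ)+1)^s) * ((4/(((n:ℝ)+1)^2*ε^2)) * ((k:ℝ) - n*q)^2) := by
        gcongr
      rw [mul_assoc]
      linarith
  refine (Bn_mono h0.le h1 n _ _ key).trans ?_
  rw [Bn_add, Bn_const, Bn_mul, Bn_var]
  have v : (n:ℝ) * q * (1-q) ≤ (n:ℝ)+1 := by
    have : (0:ℝ) ≤ n := by positivity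
    have : q * (1-q) ≤ 1 := by nlinarith
    nlinarith
  have w : ((1+((n:ℝ)+1)^s) * (4/(((n:ℝ)+1)^2*ε^2))) * ((n:ℝ) * q * (1-q)) ≤
     ((1+((n:ℝ)+1)^s) * (4/(((n:ℝ)+1)^2*ε^2))) * ((n:ℝ)+1) := by gcongr
  have e : ((1+((n:ℝ)+1)^s) * (4/(((n:ℝ)+1)^2*ε^2))) * ((n:ℝ)+1) =
     ((((n:ℝ)+1)^(-(s+1)) + ((n:ℝ)+1)^(-(1:ℝ))) * (4/ε^2)) * ((n:ℝ)+1)^s := by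
    rw [Real.rpow_neg hN.le, Real.rpow_neg hN.le, Real.rpow_add hN, Real.rpow_one]
    field_simp
  have : ((((n:ℝ)+1)^(-(s+1)) + ((n:ℝ)+1)^(-(1:ℝ))) * (4/ε^2)) * ((n:ℝ)+1)^s
      ≤ (θ-θ1) * ((n:ℝ)+1)^s := by gcongr
  nlinarith

lemma Bn_phi' {q : ℝ} (h0 : 0 < q) (h1 : q ≤ 1) (s : ℝ) (hs : -1 < s) (K : ℝ) (hK : 0 ≤ K)
    (hKs : K * q^s < 1) : ∃ θ : ℝ, 0 < θ ∧ θ < 1 ∧ ∃ n1 : ℕ, ∀ n ≥ n1,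
      K * Bn q n (fun k => ((k:ℝ)+1)^s) ≤ θ * ((n:ℝ)+1)^s := by
  have hq : 0 < q^s := by positivity
  have : q^s < q^s + (1 - K*q^s)/(2*(K+1)) := by
    have : 0 < (1 - K*q^s)/(2*(K+1)) := by apply div_pos <;> linarith
    linarith
  obtain ⟨n1, hn1⟩ := eventually_atTop.1 (Bn_phi h0 h1 s hs _ this)
  refine ⟨(1 + K*q^s)/2, by positivity, by linarith, n1, fun n hn => ?_⟩
  have h := hn1 n hn
  have e : K * (q^s + (1 - K*q^s)/(2*(K+1))) ≤ (1 + K*q^s)/2 := by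
    have : K * ((1 - K*q^s)/(2*(K+1))) ≤ (1 - K*q^s)/2 := by
      rw [mul_div_assoc', div_le_div_iff₀ (by positivity) (by norm_num)]
      nlinarith
    linarith
  calc _ ≤ K * ((q^s + (1 - K*q^s)/(2*(K+1))) * ((n:ℝ)+1)^s) := by gcongr
    _ = (K * (q^s + (1 - K*q^s)/(2*(K+1)))) * ((n:ℝ)+1)^s := by ring
    _ ≤ _ := by gcongr

/-- finitely many terms are bounded -/
lemma exists_bound (x : ℕ → ℝ) (n1 : ℕ) : ∃ C, 0 ≤ C ∧ ∀ n < n1, |x n| ≤ C := by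
  refine ⟨∑ k ∈ Finset.range n1, |x k|, Finset.sum_nonneg fun _ _ => abs_nonneg _, fun n hn => ?_⟩
  exact Finset.single_le_sum (f := fun k => |x k|) (fun _ _ => abs_nonneg _) (Finset.mem_range.2 hn)

lemma contract_O {q : ℝ} (h0 : 0 < q) (h1 : q ≤ 1) (s : ℝ) (hs : -1 < s) (K : ℝ) (hK : 0 ≤ K)
    (hKs : K * q^s < 1) (x : ℕ → ℝ) (n0 : ℕ) (Cy : ℝ) (hCy : 0 ≤ Cy)
    (h : ∀ n ≥ n0, |x n| ≤ K * Bn q n (fun k => |x k|) + Cy * ((n:ℝ)+1)^s) :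
    ∃ C, 0 ≤ C ∧ ∀ n : ℕ, |x n| ≤ C * ((n:ℝ)+1)^s := by
  obtain ⟨θ, hθ0, hθ1, n1, hn1⟩ := Bn_phi' h0 h1 s hs K hK hKs
  obtain ⟨C1, hC1, hb⟩ := exists_bound (fun n => |x n| / ((n:ℝ)+1)^s) (max n0 n1)
  have h1θ : 0 < 1 - θ := by linarith
  refine ⟨C1 + Cy/(1-θ), by positivity, fun n => ?_⟩
  induction n using Nat.strong_induction_on with
  | _ n ih =>
    have hP : (0:ℝ) < ((n:ℝ)+1)^s := by positivity
    by_cases hn : n < max n0 n1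
    · have := hb n hn
      rw [abs_of_nonneg (by positivity), div_le_iff₀ hP] at this
      have : 0 ≤ Cy/(1-θ) * ((n:ℝ)+1)^s := by positivity
      linarith
    · push Not at hn
      by_contra hcon
      push Not at hcon
      set B := |x n| / ((n:ℝ)+1)^s with hB
      have hBx : |x n| = B * ((n:ℝ)+1)^s := by rw [hB]; field_simp
      have hBC : C1 + Cy/(1-θ) < B := by rw [hB, lt_div_iff₀ hP]; exact hcon
      have hk : ∀ k ≤ n, |x k| ≤ B * ((k:ℝ)+1)^s := by
        intro k hk
        rcases hk.lt_or_eq with hk | rfl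
        · exact (ih k hk).trans (by gcongr)
        · exact hBx.le
      have a := h n (le_trans (le_max_left _ _) hn)
      have b := Bn_mono h0.le h1 n _ _ hk
      rw [Bn_mul] at b
      have c := hn1 n (le_trans (le_max_right _ _) hn)
      have hB0 : 0 ≤ B := by positivity
      have d : K * Bn q n (fun k => |x k|) ≤ B * (θ * ((n:ℝ)+1)^s) := by
        calc _ ≤ K * (B * Bn q n (fun k => ((k:ℝ)+1)^s)) := by gcongr
          _ = B * (K * Bn q n (fun k => ((k:ℝ)+1)^s)) := by ring
          _ ≤ _ := by gcongr
      rw [hBx] at a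
      have e : B * ((n:ℝ)+1)^s ≤ (B*θ + Cy) * ((n:ℝ)+1)^s := by linarith
      have f := le_of_mul_le_mul_right e hP
      have g : B ≤ Cy/(1-θ) := by rw [le_div_iff₀ h1θ]; linarith
      linarith

lemma contract_step {q : ℝ} (h0 : 0 < q) (h1 : q ≤ 1) (s : ℝ) (hs : -1 < s) (K : ℝ) (hK : 0 ≤ K)
    (hKs : K * q^s < 1) : ∃ θ : ℝ, 0 < θ ∧ θ < 1 ∧ ∀ (x : ℕ → ℝ) (B C : ℝ), 0 ≤ B → 0 ≤ C →
      (∀ k : ℕ, |x k| ≤ B * ((k:ℝ)+1)^s + C) → ∃ C', 0 ≤ C' ∧ ∀ n : ℕ,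
      K * Bn q n (fun k => |x k|) ≤ θ * B * ((n:ℝ)+1)^s + C' := by
  obtain ⟨θ, hθ0, hθ1, n1, hn1⟩ := Bn_phi' h0 h1 s hs K hK hKs
  refine ⟨θ, hθ0, hθ1, fun x B C hB hC hx => ?_⟩
  obtain ⟨C1, hC1, hb⟩ := exists_bound (fun n => K * Bn q n (fun k => |x k|)) n1
  refine ⟨C1 + K*C, by positivity, fun n => ?_⟩
  have hP : (0:ℝ) < ((n:ℝ)+1)^s := by positivity
  have hp2 : 0 ≤ θ * B * ((n:ℝ)+1)^s := by positivity
  by_cases hn : n < n1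
  · have := (le_abs_self _).trans (hb n hn)
    have : 0 ≤ K*C := by positivity
    linarith
  · push Not at hn
    have b := Bn_mono h0.le h1 n _ _ (fun k _ => hx k)
    rw [Bn_add, Bn_mul, Bn_const] at b
    calc _ ≤ K * (B * Bn q n (fun k => ((k:ℝ)+1)^s) + C) := by gcongr
      _ = B * (K * Bn q n (fun k => ((k:ℝ)+1)^s)) + K*C := by ring
      _ ≤ B * (θ * ((n:ℝ)+1)^s) + K*C := by
        have := mul_le_mul_of_nonneg_left (hn1 n hn) hB; linarith
      _ ≤ _ := by nlinarith

lemma contract_o {q : ℝ} (h0 : 0 < q) (h1 : q ≤ 1) (s : ℝ) (hs : 0 ≤ s) (K : ℝ) (hK : 0 ≤ K)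
    (hKs : K * q^s < 1) (x : ℕ → ℝ)
    (h : ∀ η > 0, ∃ C, 0 ≤ C ∧ ∀ n : ℕ,
      |x n| ≤ K * Bn q n (fun k => |x k|) + (η * ((n:ℝ)+1)^s + C)) :
    ∀ η > 0, ∃ C, 0 ≤ C ∧ ∀ n : ℕ, |x n| ≤ η * ((n:ℝ)+1)^s + C := by
  have hO : ∃ C, 0 ≤ C ∧ ∀ n : ℕ, |x n| ≤ C * ((n:ℝ)+1)^s := by
    obtain ⟨C, hC, hx⟩ := h 1 one_pos
    refine contract_O h0 h1 s (by linarith) K hK hKs x 0 (1+C) (by positivity) (fun n _ => ?_)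
    refine (hx n).trans ?_
    have : 1 ≤ ((n:ℝ)+1)^s := Real.one_le_rpow (by linarith [show (0:ℝ) ≤ n by positivity]) hs
    nlinarith
  obtain ⟨B0, hB0, hx0⟩ := hO
  obtain ⟨θ, hθ0, hθ1, hstep⟩ := contract_step h0 h1 s (by linarith) K hK hKs
  intro η hη
  obtain ⟨Ch, hCh, hh⟩ := h ((1-θ)*(η/2)) (by apply mul_pos <;> linarith)
  have it : ∀ j : ℕ, ∃ C, 0 ≤ C ∧ ∀ n : ℕ, |x n| ≤ (η/2 + θ^j * B0) * ((n:ℝ)+1)^s + C := by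
    intro j
    induction j with
    | zero =>
      refine ⟨0, le_rfl, fun n => ?_⟩
      have := hx0 n
      have : 0 ≤ η/2 * ((n:ℝ)+1)^s := by positivity
      simp; linarith
    | succ j ih =>
      obtain ⟨C, hC, hb⟩ := ih
      obtain ⟨C', hC', hb'⟩ := hstep x _ C (by positivity) hC hb
      refine ⟨C' + Ch, by positivity, fun n => ?_⟩
      have := hh n
      have := hb' n
      have e : (η/2 + θ^(j+1) * B0) * ((n:ℝ)+1)^s =
        θ * (η/2 + θ^j * B0) * ((n:ℝ)+1)^s + (1-θ)*(η/2) * ((n:ℝ)+1)^s := by ring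
      rw [e]; linarith
  have lim : Tendsto (fun j : ℕ => θ^j * B0) atTop (𝓝 (0 * B0)) :=
    (tendsto_pow_atTop_nhds_zero_of_lt_one hθ0.le hθ1).mul_const _
  obtain ⟨j, hj⟩ := (lim.eventually (gt_mem_nhds (show 0 * B0 < η/2 by simp; linarith))).exists
  obtain ⟨C, hC, hb⟩ := it j
  refine ⟨C, hC, fun n => (hb n).trans ?_⟩
  have : η/2 + θ^j * B0 ≤ η := by linarith
  gcongr

set_option maxHeartbeats 1000000 in
/-- critical exponent: supersolution -/
lemma critical_O (A : ℕ) (hA : 2 ≤ A) (L : ℝ) (hL : L < A^2) (hLA : 0 < L)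
    (ρ : ℝ) (hρ1 : 1 < ρ) (hρ2 : ρ ≤ 2)
    (hAρ : (A:ℝ)^ρ = L) (s : ℝ) (hs1 : 1 ≤ s) (hs : s < ρ)
    (x : ℕ → ℝ) (hx0 : x 0 = 0) (hx1 : x 1 = 0) (hxn : ∀ n, 0 ≤ x n) (Cr : ℝ) (hCr : 0 ≤ Cr)
    (h : ∀ n, x n ≤ L * Bn (1/(A:ℝ)) n x + Cr * ((n:ℝ)+1)^s) :
    ∃ C, 0 ≤ C ∧ ∀ n : ℕ, x n ≤ C * ((n:ℝ)+1)^ρ := by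
  have hA0 : (0:ℝ) < A := by positivity
  have hA1 : (1:ℝ) < A := by exact_mod_cast (by omega : 1 < A)
  set q : ℝ := 1/(A:ℝ) with hq
  have h0 : 0 < q := by positivity
  have h1 : q ≤ 1 := by rw [hq, div_le_one hA0]; exact hA1.le
  have hqA : q = (A:ℝ)⁻¹ := by rw [hq, one_div]
  -- g
  set g : ℕ → ℝ := fun n => ((n:ℝ)*(n-1))^(ρ/2) with hg
  have nn : ∀ k : ℕ, (0:ℝ) ≤ (k:ℝ)*(k-1) := by
    intro k
    rcases Nat.eq_zero_or_pos k with rfl | hk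
    · simp
    · have : (1:ℝ) ≤ k := by exact_mod_cast hk
      apply mul_nonneg <;> linarith
  have hgB : ∀ n, L * Bn q n g ≤ g n := by
    intro n
    have := Bn_rpow_le h0.le h1 n (fun k => (k:ℝ)*(k-1)) nn (ρ/2) (by linarith) (by linarith)
    rw [Bn_fact2, Real.mul_rpow (nn n) (by positivity)] at this
    have e : (q^2)^(ρ/2) = L⁻¹ := by
      rw [← Real.rpow_natCast, ← Real.rpow_mul h0.le, ← hAρ, hqA, Real.inv_rpow hA0.le]
      congr 2; push_cast; ring
    rw [e] at this
    calc L * Bn q n g ≤ L * (g n * L⁻¹) := by gcongr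
      _ = g n := by field_simp
  -- h
  set φ : ℕ → ℝ := fun n => ((n:ℝ)+1)^s with hφ
  set lam : ℝ := L * q^s with hlam
  have hlam1 : 1 < lam := by
    rw [hlam, ← hAρ, hqA, Real.inv_rpow hA0.le, ← div_eq_mul_inv, ← Real.rpow_sub hA0]
    exact Real.one_lt_rpow hA1 (by linarith)
  have hφB : ∀ n, lam * φ n ≤ L * Bn q n φ := by
    intro n
    have := le_Bn_rpow h0.le h1 n (fun k => (k:ℝ)+1) (fun k => by positivity) s hs1
    rw [Bn_add, Bn_id, Bn_const] at this
    have e : (q * ((n:ℝ)+1))^s ≤ ((n:ℝ)*q+1)^s := by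
      apply Real.rpow_le_rpow (by positivity) _ (by linarith)
      nlinarith
    rw [Real.mul_rpow h0.le (by positivity)] at e
    rw [hlam, mul_assoc]
    gcongr
    exact e.trans this
  have hφ2 : φ 1 ≤ 4 := by
    simp only [hφ]
    calc (((1:ℕ):ℝ)+1)^s ≤ (((1:ℕ):ℝ)+1)^(2:ℝ) :=
          Real.rpow_le_rpow_of_exponent_le (by norm_num) (by linarith)
      _ = 4 := by norm_num
  have hφ0 : φ 0 = 1 := by simp [hφ]
  set η := lam - 1 with hη
  have hηp : 0 < η := by linarith
  obtain ⟨B', hB'0, hB'⟩ : ∃ B', 0 ≤ B' ∧ 2 * Cr = B' * η := ⟨2*Cr/η, by positivity, by field_simp⟩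
  -- n0
  have t1 : Tendsto (fun n : ℕ => φ n) atTop atTop :=
    (tendsto_rpow_atTop (by linarith)).comp
      (tendsto_atTop_add_const_right _ _ tendsto_natCast_atTop_atTop)
  obtain ⟨n0, hn0⟩ := eventually_atTop.1 (t1.eventually (eventually_ge_atTop (8*L/η)))
  -- B
  obtain ⟨C1, hC1, hb⟩ := exists_bound (fun n => (x n + B' * φ n) / g n) n0
  set b : ℕ → ℝ := fun n => (C1 * g n - B' * φ n) + 4*B' with hbdef
  have hbB : ∀ n ≥ n0, L * Bn q n b + Cr * φ n ≤ b n := by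
    intro n hn
    simp only [hbdef]
    rw [Bn_add, Bn_sub, Bn_mul, Bn_mul, Bn_const]
    have a1 := hgB n
    have a2 := hφB n
    have a3 := hn0 n hn
    rw [div_le_iff₀ hηp] at a3
    have a4 : C1 * (L * Bn q n g) ≤ C1 * g n := by gcongr
    have a5 : B' * (lam * φ n) ≤ B' * (L * Bn q n φ) := by gcongr
    have a6 : B' * (8 * L) ≤ B' * (φ n * η) := by gcongr
    have a7 : lam = η + 1 := by rw [hη]; ring
    rw [a7] at a5
    have a8 : 2 * Cr * φ n = B' * η * φ n := by rw [hB']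
    nlinarith
  have main : ∀ n, x n ≤ b n := by
    intro n
    induction n using Nat.strong_induction_on with
    | _ n ih =>
    rcases Nat.lt_or_ge n 2 with hn2 | hn2
    · interval_cases n
      · have : g 0 = 0 := by
          simp only [hg, Nat.cast_zero, zero_mul]; exact Real.zero_rpow (by linarith)
        simp only [hbdef, this, hφ0, hx0]; linarith
      · have : g 1 = 0 := by
          simp only [hg, Nat.cast_one, sub_self, mul_zero]; exact Real.zero_rpow (by linarith)
        simp only [hbdef, this, hx1]; nlinarith
    · have hn2' : (2:ℝ) ≤ n := by exact_mod_cast hn2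
      by_cases hn : n < n0
      · have := (le_abs_self _).trans (hb n hn)
        have gp : 0 < g n := by
          simp only [hg]; apply Real.rpow_pos_of_pos; nlinarith
        rw [div_le_iff₀ gp] at this
        simp only [hbdef]; linarith
      · push Not at hn
        by_contra hcon
        push Not at hcon
        -- delta = x n - b n > 0
        set δ := x n - b n with hδ
        have hδp : 0 < δ := by linarith
        have hk : ∀ k ≤ n, x k ≤ b k + (δ/(n*(n-1))) * ((k:ℝ)*(k-1)) := by
          intro k hk
          rcases hk.lt_or_eq with hk | rfl
          · have := ih k hk
            have : 0 ≤ (δ/((n:ℝ)*(n-1))) * ((k:ℝ)*(k-1)) := by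
              have := nn k; have := nn n; positivity
            linarith
          · have : (k:ℝ)*(k-1) ≠ 0 := by
              have : (0:ℝ) < (k:ℝ)*(k-1) := by nlinarith
              exact this.ne'
            rw [div_mul_cancel₀ _ this]; linarith
        have a := Bn_mono h0.le h1 n _ _ hk
        rw [Bn_add, Bn_mul, Bn_fact2] at a
        have hnn : (0:ℝ) < (n:ℝ)*(n-1) := by nlinarith
        have e : δ/((n:ℝ)*(n-1)) * ((n:ℝ)*(n-1)*q^2) = δ * q^2 := by
          rw [← mul_assoc, div_mul_cancel₀ _ hnn.ne']
        rw [e] at a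
        have c := h n
        have d := hbB n hn
        have f : L * q^2 < 1 := by
          rw [hqA, inv_pow, ← div_eq_mul_inv, div_lt_one (by positivity)]; exact hL
        have a' : L * Bn q n x ≤ L * (Bn q n b + δ*q^2) := by gcongr
        have : x n ≤ b n + (L*q^2) * δ := by
          simp only [hφ] at d; linarith
        nlinarith
  refine ⟨C1 + 4*B', by positivity, fun n => (main n).trans ?_⟩
  have gle : g n ≤ ((n:ℝ)+1)^ρ := by
    simp only [hg]
    calc ((n:ℝ)*(n-1))^(ρ/2) ≤ (((n:ℝ)+1)^2)^(ρ/2) := by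
          apply Real.rpow_le_rpow (nn n) _ (by linarith)
          nlinarith [show (0:ℝ) ≤ n by positivity]
      _ = ((n:ℝ)+1)^ρ := by
        rw [← Real.rpow_natCast, ← Real.rpow_mul (by positivity)]; congr 1; push_cast; ring
  have p1 : 1 ≤ ((n:ℝ)+1)^ρ :=
    Real.one_le_rpow (by linarith [show (0:ℝ) ≤ n by positivity]) (by linarith)
  have p2 : 0 ≤ φ n := by simp only [hφ]; positivity
  have p3 := mul_nonneg hB'0 p2
  have p4 := mul_le_mul_of_nonneg_left gle hC1
  have p5 := mul_le_mul_of_nonneg_left p1 (by positivity : 0 ≤ 4*B')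
  have p6 : b n = (C1 * g n - B' * φ n) + 4*B' := rfl
  rw [p6, add_mul]
  linarith

end GT


namespace GT
open PowerSeries

/-- the series `exp (a z)` -/
noncomputable def ex (a : ℝ) : PowerSeries ℝ := rescale a (exp ℝ)

lemma coeff_ex (a : ℝ) (j : ℕ) : coeff j (ex a) = a^j / j.factorial := by
  simp [ex, coeff_rescale, coeff_exp, div_eq_mul_inv]

lemma ex_add (a b : ℝ) : ex (a+b) = ex a * ex b := (exp_mul_exp_eq_exp_add a b).symm

lemma ex_zero : ex 0 = 1 := by
  ext j; rw [coeff_ex, coeff_one]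
  split_ifs with h
  · simp [h]
  · simp [h]

lemma ex_sum {ι : Type*} (s : Finset ι) (f : ι → ℝ) : ex (∑ i ∈ s, f i) = ∏ i ∈ s, ex (f i) := by
  classical
  induction s using Finset.induction_on with
  | empty => simp [ex_zero]
  | insert a s ha ih => rw [Finset.sum_insert ha, Finset.prod_insert ha, ex_add, ih]

lemma ex_nsmul (M : ℕ) (a : ℝ) : ex (M * a) = ex a ^ M := by
  induction M with
  | zero => simp [ex_zero]
  | succ n ih => rw [pow_succ, ← ih, ← ex_add]; congr 1; push_cast; ring

/-- truncated weighted norm -/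
noncomputable def nrm (m : ℕ) (t : ℝ) (f : PowerSeries ℝ) : ℝ :=
  ∑ j ∈ Finset.range (m+1), |coeff j f| * t^j

section nrm
variable {m : ℕ} {t : ℝ}

lemma nrm_nonneg (ht : 0 ≤ t) (f : PowerSeries ℝ) : 0 ≤ nrm m t f :=
  Finset.sum_nonneg fun _ _ => by positivity

lemma nrm_add_le (ht : 0 ≤ t) (f g : PowerSeries ℝ) : nrm m t (f+g) ≤ nrm m t f + nrm m t g := by
  unfold nrm
  rw [← Finset.sum_add_distrib]
  apply Finset.sum_le_sum
  intro j _
  rw [← add_mul, map_add]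
  gcongr
  exact abs_add_le _ _

lemma nrm_neg (f : PowerSeries ℝ) : nrm m t (-f) = nrm m t f := by
  simp [nrm]

lemma nrm_zero : nrm m t 0 = 0 := by simp [nrm]

lemma nrm_one : nrm m t 1 = 1 := by
  unfold nrm
  rw [Finset.sum_range_succ', Finset.sum_eq_zero]
  · simp
  · intro j _; rw [coeff_one]; simp

lemma nrm_C_mul (c : ℝ) (f : PowerSeries ℝ) : nrm m t (C c * f) = |c| * nrm m t f := by
  simp only [nrm, coeff_C_mul, abs_mul, Finset.mul_sum, mul_assoc]

lemma nrm_sum_le (ht : 0 ≤ t) {ι : Type*} (s : Finset ι) (f : ι → PowerSeries ℝ) :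
    nrm m t (∑ i ∈ s, f i) ≤ ∑ i ∈ s, nrm m t (f i) := by
  classical
  induction s using Finset.induction_on with
  | empty => simp [nrm_zero]
  | insert a s ha ih =>
    rw [Finset.sum_insert ha, Finset.sum_insert ha]
    exact (nrm_add_le ht _ _).trans (by gcongr)

lemma nrm_mul_le (ht : 0 ≤ t) (f g : PowerSeries ℝ) : nrm m t (f*g) ≤ nrm m t f * nrm m t g := by
  unfold nrm
  rw [Finset.sum_mul_sum, ← Finset.sum_product']
  calc ∑ j ∈ Finset.range (m+1), |coeff j (f*g)| * t^j
      ≤ ∑ j ∈ Finset.range (m+1), ∑ p ∈ Finset.HasAntidiagonal.antidiagonal j,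
          (|coeff p.1 f| * t^p.1) * (|coeff p.2 g| * t^p.2) := by
        apply Finset.sum_le_sum
        intro j _
        rw [coeff_mul]
        calc _ ≤ (∑ p ∈ Finset.HasAntidiagonal.antidiagonal j, |coeff p.1 f * coeff p.2 g|) * t^j := by
              gcongr; exact Finset.abs_sum_le_sum_abs _ _
          _ = _ := by
            rw [Finset.sum_mul]
            apply Finset.sum_congr rfl
            intro p hp
            rw [Finset.HasAntidiagonal.mem_antidiagonal] at hp
            rw [abs_mul, ← hp, pow_add]; ring
    _ = ∑ p ∈ (Finset.range (m+1)).sigma (fun j => Finset.HasAntidiagonal.antidiagonal j),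
          (|coeff p.2.1 f| * t^p.2.1) * (|coeff p.2.2 g| * t^p.2.2) := by
        rw [Finset.sum_sigma]
    _ = ∑ p ∈ ((Finset.range (m+1)).sigma (fun j => Finset.HasAntidiagonal.antidiagonal j)).image (fun p => p.2),
          (|coeff p.1 f| * t^p.1) * (|coeff p.2 g| * t^p.2) := by
        rw [Finset.sum_image]
        rintro ⟨j, p⟩ h1 ⟨j', p'⟩ h2 h
        simp at h1 h2 h
        subst h
        obtain ⟨_, h1⟩ := h1
        obtain ⟨_, h2⟩ := h2
        subst h1; subst h2; rfl
    _ ≤ _ := by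
        apply Finset.sum_le_sum_of_subset_of_nonneg
        · intro p hp
          simp at hp ⊢
          omega
        · intros; positivity

lemma nrm_prod_le (ht : 0 ≤ t) {ι : Type*} (s : Finset ι) (f : ι → PowerSeries ℝ) (K : ℝ)
    (hK : ∀ i ∈ s, nrm m t (f i) ≤ K) :
    nrm m t (∏ i ∈ s, f i) ≤ K ^ s.card := by
  classical
  induction s using Finset.induction_on with
  | empty => simp [nrm_one]
  | insert a s ha ih =>
    rw [Finset.prod_insert ha, Finset.card_insert_of_notMem ha, pow_succ']
    have k0 : 0 ≤ K := (nrm_nonneg ht _).trans (hK a (by simp))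
    refine (nrm_mul_le ht _ _).trans ?_
    have := ih (fun i hi => hK i (by simp [hi]))
    have := hK a (by simp)
    have := nrm_nonneg (m := m) ht (∏ i ∈ s, f i)
    gcongr

lemma nrm_prod_sub_le (ht : 0 ≤ t) {ι : Type*} (s : Finset ι) (f g : ι → PowerSeries ℝ) (K ε : ℝ)
    (hK1 : 1 ≤ K) (hf : ∀ i ∈ s, nrm m t (f i) ≤ K) (hg : ∀ i ∈ s, nrm m t (g i) ≤ K)
    (h : ∀ i ∈ s, nrm m t (f i - g i) ≤ ε) :
    nrm m t (∏ i ∈ s, f i - ∏ i ∈ s, g i) ≤ s.card * K ^ s.card * ε := by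
  classical
  induction s using Finset.induction_on with
  | empty => simp [nrm_zero]
  | insert a s ha ih =>
    have e : ∏ i ∈ insert a s, f i - ∏ i ∈ insert a s, g i
        = f a * (∏ i ∈ s, f i - ∏ i ∈ s, g i) + (f a - g a) * ∏ i ∈ s, g i := by
      rw [Finset.prod_insert ha, Finset.prod_insert ha]; ring
    rw [e, Finset.card_insert_of_notMem ha]
    have a1 := ih (fun i hi => hf i (by simp [hi])) (fun i hi => hg i (by simp [hi]))
      (fun i hi => h i (by simp [hi]))
    have a2 := hf a (by simp)
    have a3 := h a (by simp)
    have a4 := nrm_prod_le ht s g K (fun i hi => hg i (by simp [hi]))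
    have e0 : 0 ≤ ε := (nrm_nonneg ht _).trans a3
    have b1 := nrm_mul_le (m := m) ht (f a) (∏ i ∈ s, f i - ∏ i ∈ s, g i)
    have b2 := nrm_mul_le (m := m) ht (f a - g a) (∏ i ∈ s, g i)
    have c1 : nrm m t (f a) * nrm m t (∏ i ∈ s, f i - ∏ i ∈ s, g i) ≤ K * (s.card * K ^ s.card * ε) := by
      have := nrm_nonneg (m := m) ht (∏ i ∈ s, f i - ∏ i ∈ s, g i)
      gcongr
    have c2 : nrm m t (f a - g a) * nrm m t (∏ i ∈ s, g i) ≤ ε * K ^ (s.card+1) := by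
      have := nrm_nonneg (m := m) ht (∏ i ∈ s, g i)
      have : K ^ s.card ≤ K ^ (s.card+1) := pow_le_pow_right₀ hK1 (by omega)
      have := a4.trans this
      gcongr
    have := nrm_add_le (m := m) ht (f a * (∏ i ∈ s, f i - ∏ i ∈ s, g i)) ((f a - g a) * ∏ i ∈ s, g i)
    push_cast
    have e2 : ((s.card:ℝ)+1) * K^(s.card+1) * ε = K * (s.card * K ^ s.card * ε) + ε * K ^ (s.card+1) := by
      ring
    linarith

lemma coeff_le_nrm (ht : 0 ≤ t) (f : PowerSeries ℝ) (j : ℕ) (hj : j ≤ m) :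
    |coeff j f| * t^j ≤ nrm m t f :=
  Finset.single_le_sum (f := fun j => |coeff j f| * t^j) (fun _ _ => by positivity)
    (Finset.mem_range.2 (by omega))

end nrm

/-- the series `exp (w z^2 / 2)` -/
noncomputable def Gs (w : ℝ) : PowerSeries ℝ := expand 2 two_ne_zero (ex (w/2))

lemma coeff_Gs (w : ℝ) (j : ℕ) :
    coeff j (Gs w) = if Even j then (w/2)^(j/2) / (j/2).factorial else 0 := by
  unfold Gs
  rw [coeff_expand]
  simp only [coeff_ex, even_iff_two_dvd]

lemma Gs_add (a b : ℝ) : Gs (a+b) = Gs a * Gs b := by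
  unfold Gs; rw [← map_mul, ← ex_add]; congr 2; ring

lemma Gs_zero : Gs 0 = 1 := by
  unfold Gs; simp [ex_zero]

lemma Gs_sum {ι : Type*} (s : Finset ι) (f : ι → ℝ) : Gs (∑ i ∈ s, f i) = ∏ i ∈ s, Gs (f i) := by
  classical
  induction s using Finset.induction_on with
  | empty => simp [Gs_zero]
  | insert a s ha ih => rw [Finset.sum_insert ha, Finset.prod_insert ha, Gs_add, ih]

lemma Gs_nsmul (M : ℕ) (a : ℝ) : Gs (M * a) = Gs a ^ M := by
  induction M with
  | zero => simp [Gs_zero]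
  | succ n ih => rw [pow_succ, ← ih, ← Gs_add]; congr 1; push_cast; ring

lemma nrm_ex_sub_one (m : ℕ) (t : ℝ) (ht : 0 ≤ t) (D : ℝ) :
    nrm m t (ex D - 1) ≤ ∑ j ∈ Finset.range m, |D|^(j+1) * t^(j+1) := by
  unfold nrm
  rw [Finset.sum_range_succ']
  have : coeff 0 (ex D - 1) = 0 := by rw [map_sub, coeff_ex, coeff_one]; simp
  rw [this, abs_zero, zero_mul, add_zero]
  apply Finset.sum_le_sum
  intro j _
  rw [map_sub, coeff_ex, coeff_one, if_neg (by omega), sub_zero, abs_div, abs_pow]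
  gcongr
  rw [Nat.abs_cast]
  apply div_le_self (by positivity)
  exact_mod_cast Nat.factorial_pos _

lemma nrm_Gs_sub_one (m : ℕ) (t : ℝ) (ht : 0 ≤ t) (w Cb : ℝ) (hCb : |w| * t^2 ≤ Cb) :
    nrm m t (Gs w - 1) ≤ (m * (1+Cb)^m) * (|w| * t^2) := by
  have hc : 0 ≤ Cb := le_trans (by positivity) hCb
  unfold nrm
  rw [Finset.sum_range_succ']
  have : coeff 0 (Gs w - 1) = 0 := by rw [map_sub, coeff_Gs, coeff_one]; simp
  rw [this, abs_zero, zero_mul, add_zero]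
  have : (m * (1+Cb)^m) * (|w| * t^2) = ∑ j ∈ Finset.range m, ((1+Cb)^m * (|w| * t^2)) := by
    simp; ring
  rw [this]
  apply Finset.sum_le_sum
  intro j hj
  rw [Finset.mem_range] at hj
  rw [map_sub, coeff_Gs, coeff_one, if_neg (show ¬ j+1 = 0 by omega), sub_zero]
  split_ifs with he
  · obtain ⟨r, hr⟩ := he
    obtain ⟨i, rfl⟩ : ∃ i, r = i+1 := ⟨r-1, by omega⟩
    rw [hr, show (i+1+(i+1))/2 = i+1 by omega, show i+1+(i+1) = 2*(i+1) by ring, pow_mul t]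
    rw [abs_div, abs_pow, abs_div, Nat.abs_cast]
    calc (|w|/|2|)^(i+1) / ((i+1).factorial:ℝ) * (t^2)^(i+1) ≤ |w|^(i+1) * (t^2)^(i+1) := by
          gcongr
          refine (div_le_self (by positivity) ?_).trans ?_
          · exact_mod_cast Nat.factorial_pos _
          · gcongr
            apply div_le_self (by positivity) (by norm_num)
      _ = (|w| * t^2)^i * (|w| * t^2) := by rw [← mul_pow, pow_succ]
      _ ≤ (1+Cb)^m * (|w| * t^2) := by
          gcongr
          calc (|w| * t^2)^i ≤ (1+Cb)^i := by gcongr; linarith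
            _ ≤ (1+Cb)^m := pow_le_pow_right₀ (by linarith) (by omega)
  · simp; positivity

lemma nrm_Gs_le (m : ℕ) (t : ℝ) (ht : 0 ≤ t) (w Cb : ℝ) (hCb : |w| * t^2 ≤ Cb) :
    nrm m t (Gs w) ≤ 1 + (m * (1+Cb)^m) * Cb := by
  have hc : 0 ≤ Cb := le_trans (by positivity) hCb
  have e : Gs w = 1 + (Gs w - 1) := by ring
  rw [e]
  refine (nrm_add_le ht _ _).trans ?_
  rw [nrm_one]
  have := nrm_Gs_sub_one m t ht w Cb hCb
  have : (m * (1+Cb)^m) * (|w| * t^2) ≤ (m * (1+Cb)^m) * Cb := by gcongr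
  linarith

lemma nrm_Gs_sub_le (m : ℕ) (t : ℝ) (ht : 0 ≤ t) (Cb : ℝ) (hc : 0 ≤ Cb) : ∃ K, 0 ≤ K ∧
    K = (1 + (m * (1+Cb)^m) * Cb) * (m * (1+2*Cb)^m) ∧
    ∀ w w' : ℝ, |w| * t^2 ≤ Cb → |w'| * t^2 ≤ Cb → nrm m t (Gs w - Gs w') ≤ K * (|w-w'| * t^2) := by
  refine ⟨_, by positivity, rfl, fun w w' h h' => ?_⟩
  have e : Gs w - Gs w' = Gs w' * (Gs (w-w') - 1) := by
    rw [mul_sub, ← Gs_add]; simp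
  rw [e]
  refine (nrm_mul_le ht _ _).trans ?_
  have a := nrm_Gs_le m t ht w' Cb h'
  have b := nrm_Gs_sub_one m t ht (w-w') (2*Cb) (by
    have : |w - w'| ≤ |w| + |w'| := abs_sub w w'
    nlinarith [sq_nonneg t])
  rw [mul_assoc]
  have := nrm_nonneg (m := m) ht (Gs (w - w') - 1)
  gcongr

/-- `f = g + x z^m` modulo `z^(m+1)` -/
def Sim (m : ℕ) (f g : PowerSeries ℝ) (x : ℝ) : Prop :=
  (X : PowerSeries ℝ)^(m+1) ∣ f - (g + C x * X^m)

lemma Sim.coeff_eq {m : ℕ} {f g : PowerSeries ℝ} {x : ℝ} (h : Sim m f g x) :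
    coeff m f = coeff m g + x := by
  have := (X_pow_dvd_iff.1 h) m (by omega)
  rw [map_sub, map_add, coeff_C_mul, coeff_X_pow_self] at this
  linarith

lemma Sim.mul {m : ℕ} (hm : 1 ≤ m) {f g f' g' : PowerSeries ℝ} {x x' : ℝ} (h : Sim m f g x)
    (h' : Sim m f' g' x') (hg : constantCoeff g = 1) (hg' : constantCoeff g' = 1) :
    Sim m (f*f') (g*g') (x+x') := by
  obtain ⟨a, ha⟩ := h
  obtain ⟨b, hb⟩ := h'
  obtain ⟨u, hu⟩ : (X : PowerSeries ℝ) ∣ g - 1 := by rw [X_dvd_iff]; simp [hg]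
  obtain ⟨u', hu'⟩ : (X : PowerSeries ℝ) ∣ g' - 1 := by rw [X_dvd_iff]; simp [hg']
  obtain ⟨k, rfl⟩ : ∃ k, m = k+1 := ⟨m-1, by omega⟩
  have e1 : f = (g + C x * X^(k+1)) + X^(k+1+1) * a := by rw [← ha]; ring
  have e2 : f' = (g' + C x' * X^(k+1)) + X^(k+1+1) * b := by rw [← hb]; ring
  have e3 : g = 1 + X * u := by rw [← hu]; ring
  have e4 : g' = 1 + X * u' := by rw [← hu']; ring
  refine ⟨u * C x' + u' * C x + C x * C x' * X^k + a * f' + (g + C x * X^(k+1)) * b, ?_⟩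
  rw [map_add, e1, e2, e3, e4]
  ring

lemma Sim.refl (m : ℕ) (f : PowerSeries ℝ) : Sim m f f 0 := by
  simp [Sim]

lemma Sim.prod {m : ℕ} (hm : 1 ≤ m) {ι : Type*} (s : Finset ι) (f g : ι → PowerSeries ℝ) (x : ι → ℝ)
    (h : ∀ i ∈ s, Sim m (f i) (g i) (x i)) (hg : ∀ i ∈ s, constantCoeff (g i) = 1) :
    Sim m (∏ i ∈ s, f i) (∏ i ∈ s, g i) (∑ i ∈ s, x i) := by
  classical
  induction s using Finset.induction_on with
  | empty => simpa using Sim.refl m 1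
  | insert a s ha ih =>
    rw [Finset.prod_insert ha, Finset.prod_insert ha, Finset.sum_insert ha]
    refine (h a (by simp)).mul hm (ih (fun i hi => h i (by simp [hi])) (fun i hi => hg i (by simp [hi])))
      (hg a (by simp)) ?_
    rw [map_prod]
    exact Finset.prod_eq_one fun i hi => hg i (by simp [hi])

lemma Sim.pow {m : ℕ} (hm : 1 ≤ m) {f g : PowerSeries ℝ} {x : ℝ}
    (h : Sim m f g x) (hg : constantCoeff g = 1) (M : ℕ) : Sim m (f^M) (g^M) (M * x) := by
  have := Sim.prod hm (Finset.range M) (fun _ => f) (fun _ => g) (fun _ => x) (fun _ _ => h) (fun _ _ => hg)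
  simpa using this

lemma Sim.sum {m : ℕ} {ι : Type*} (s : Finset ι) (f g : ι → PowerSeries ℝ) (x : ι → ℝ)
    (h : ∀ i ∈ s, Sim m (f i) (g i) (x i)) :
    Sim m (∑ i ∈ s, f i) (∑ i ∈ s, g i) (∑ i ∈ s, x i) := by
  unfold Sim at *
  have e : ∑ i ∈ s, f i - (∑ i ∈ s, g i + C (∑ i ∈ s, x i) * X^m)
    = ∑ i ∈ s, (f i - (g i + C (x i) * X^m)) := by
    rw [map_sum, Finset.sum_mul, ← Finset.sum_add_distrib, ← Finset.sum_sub_distrib]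
  rw [e]
  exact Finset.dvd_sum h

lemma Sim.Cmul {m : ℕ} {f g : PowerSeries ℝ} {x : ℝ} (c : ℝ) (h : Sim m f g x) :
    Sim m (C c * f) (C c * g) (c * x) := by
  unfold Sim at *
  have e : C c * f - (C c * g + C (c*x) * X^m) = C c * (f - (g + C x * X^m)) := by
    rw [map_mul]; ring
  rw [e]
  exact h.mul_left _

lemma Sim.remove (m : ℕ) (f : PowerSeries ℝ) (x : ℝ) : Sim m f (f - C x * X^m) x := by
  simp [Sim]

/-! ### colourings -/

/-- size of a colour class -/
def cnt {n A : ℕ} (c : Fin n → Fin A) (a : Fin A) : ℕ := Fintype.card {l // c l = a}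

lemma cnt_le {n A : ℕ} (c : Fin n → Fin A) (a : Fin A) : cnt c a ≤ n := by
  have := Fintype.card_subtype_le (fun l => c l = a)
  simpa [cnt] using this

lemma cnt_sum {n A : ℕ} (c : Fin n → Fin A) : ∑ a, cnt c a = n := by
  have : Fintype.card (Σ a, {l // c l = a}) = Fintype.card (Fin n) :=
    Fintype.card_congr (Equiv.sigmaFiberEquiv c)
  rw [Fintype.card_sigma, Fintype.card_fin] at this
  exact this

/-- real average over colourings -/
noncomputable def avr (A n : ℕ) (f : (Fin n → Fin A) → ℝ) : ℝ := ((A:ℝ)^n)⁻¹ * ∑ c, f c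

/-- power series average over colourings -/
noncomputable def avp (A n : ℕ) (f : (Fin n → Fin A) → PowerSeries ℝ) : PowerSeries ℝ :=
  C ((A:ℝ)^n)⁻¹ * ∑ c, f c

lemma cnt_cons {n A : ℕ} (b : Fin A) (c : Fin n → Fin A) (a : Fin A) :
    cnt (Fin.cons b c : Fin (n+1) → Fin A) a = cnt c a + (if b = a then 1 else 0) := by
  unfold cnt
  rw [Fintype.card_subtype, Fintype.card_subtype, Finset.card_filter, Finset.card_filter,
    Fin.sum_univ_succ]
  simp [add_comm]

lemma avr_cnt {A : ℕ} (hA : 0 < A) (n : ℕ) (a : Fin A) (f : ℕ → ℝ) :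
    avr A n (fun c => f (cnt c a)) = Bn (1/(A:ℝ)) n f := by
  have hA' : (A:ℝ) ≠ 0 := by positivity
  induction n generalizing f with
  | zero => simp [avr, Bn, cnt]
  | succ n ih =>
    simp only [Bn]
    rw [← ih, ← ih]
    unfold avr
    rw [← (Fin.consEquiv (fun _ => Fin A)).sum_comp, Fintype.sum_prod_type]
    have hc : ∀ x y, (Fin.consEquiv (fun _ => Fin A)) (x,y) = (Fin.cons x y : Fin (n+1) → Fin A) :=
      fun _ _ => rfl
    simp only [hc, cnt_cons]
    rw [← Finset.add_sum_erase _ _ (Finset.mem_univ a)]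
    have : ∀ b ∈ Finset.univ.erase a, ∑ c : Fin n → Fin A, f (cnt c a + if b = a then 1 else 0)
        = ∑ c : Fin n → Fin A, f (cnt c a) := by
      intro b hb
      simp [Finset.ne_of_mem_erase hb]
    rw [Finset.sum_congr rfl this]
    simp only [if_true, Finset.sum_const, Finset.card_erase_of_mem (Finset.mem_univ a),
      Finset.card_univ, Fintype.card_fin, nsmul_eq_mul]
    rw [Nat.cast_sub (by omega)]
    field_simp
    push_cast
    ring

lemma avr_mono {A n : ℕ} (f g : (Fin n → Fin A) → ℝ) (h : ∀ c, f c ≤ g c) : avr A n f ≤ avr A n g := by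
  unfold avr
  gcongr with c
  exact h c

lemma avr_add {A n : ℕ} (f g : (Fin n → Fin A) → ℝ) :
    avr A n (fun c => f c + g c) = avr A n f + avr A n g := by
  simp [avr, Finset.sum_add_distrib, mul_add]

lemma avr_mul {A n : ℕ} (k : ℝ) (f : (Fin n → Fin A) → ℝ) :
    avr A n (fun c => k * f c) = k * avr A n f := by
  simp only [avr, ← Finset.mul_sum]; ring

lemma avr_sum {A n : ℕ} {ι : Type*} (s : Finset ι) (f : ι → (Fin n → Fin A) → ℝ) :
    avr A n (fun c => ∑ i ∈ s, f i c) = ∑ i ∈ s, avr A n (f i) := by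
  simp only [avr]
  rw [Finset.sum_comm, Finset.mul_sum]

lemma avr_const {A n : ℕ} (hA : 0 < A) (k : ℝ) : avr A n (fun _ => k) = k := by
  have hA' : (A:ℝ) ≠ 0 := by positivity
  simp [avr]; field_simp

lemma nrm_avp_le {A n m : ℕ} {t : ℝ} (ht : 0 ≤ t) (f : (Fin n → Fin A) → PowerSeries ℝ) :
    nrm m t (avp A n f) ≤ avr A n (fun c => nrm m t (f c)) := by
  unfold avp avr
  rw [nrm_C_mul, abs_of_nonneg (by positivity)]
  gcongr
  exact nrm_sum_le ht _ _

lemma coeff_avp {A n : ℕ} (f : (Fin n → Fin A) → PowerSeries ℝ) (j : ℕ) :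
    coeff j (avp A n f) = avr A n (fun c => coeff j (f c)) := by
  simp [avp, avr, coeff_C_mul]

lemma avp_sub {A n : ℕ} (f g : (Fin n → Fin A) → PowerSeries ℝ) :
    avp A n f - avp A n g = avp A n (fun c => f c - g c) := by
  simp [avp, Finset.sum_sub_distrib, mul_sub]

lemma avp_const {A n : ℕ} (hA : 0 < A) (f : PowerSeries ℝ) : avp A n (fun _ => f) = f := by
  ext j; rw [coeff_avp, avr_const hA]

lemma Sim.avp {m A n : ℕ} (f g : (Fin n → Fin A) → PowerSeries ℝ) (x : (Fin n → Fin A) → ℝ)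
    (h : ∀ c, Sim m (f c) (g c) (x c)) : Sim m (GT.avp A n f) (GT.avp A n g) (avr A n x) :=
  Sim.Cmul _ (Sim.sum _ _ _ _ fun c _ => h c)

lemma avr_sum_cnt {A : ℕ} (hA : 0 < A) (n : ℕ) (f : ℕ → ℝ) :
    avr A n (fun c => ∑ a, f (cnt c a)) = A * Bn (1/(A:ℝ)) n f := by
  rw [avr_sum]
  simp [avr_cnt hA]

end GT


namespace GT
open PowerSeries

/-- the toll -/
noncomputable def tt (n : ℕ) : ℝ := if 2 ≤ n then 1 else 0

/-- the recursion satisfied by the generating functions of moments -/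
structure Sys (A M : ℕ) (R : ℕ → PowerSeries ℝ) : Prop where
  hM : 2 ≤ M
  hMA : M < A
  const : ∀ n, constantCoeff (R n) = 1
  hrec : ∀ n, R n = ex (tt n) * (avp A n (fun c => ∏ a, R (cnt c a)))^M
  zero : R 0 = 1
  one : R 1 = 1
  vnn : ∀ n, 0 ≤ coeff 2 (ex (-(coeff 1 (R n))) * R n)

lemma sim_of_coeff {m : ℕ} {f g : PowerSeries ℝ} (h : ∀ j < m, coeff j f = coeff j g) :
    Sim m f g (coeff m f - coeff m g) := by
  unfold Sim
  rw [X_pow_dvd_iff]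
  intro j hj
  rw [map_sub, map_add, coeff_C_mul, coeff_X_pow]
  split_ifs with h'
  · subst h'; ring
  · rw [h j (by omega)]; ring

/-- the mean -/
noncomputable def eR (R : ℕ → PowerSeries ℝ) (n : ℕ) : ℝ := coeff 1 (R n)
/-- centred series -/
noncomputable def FR (R : ℕ → PowerSeries ℝ) (n : ℕ) : PowerSeries ℝ := ex (-(eR R n)) * R n
/-- the variance -/
noncomputable def vR (R : ℕ → PowerSeries ℝ) (n : ℕ) : ℝ := 2 * coeff 2 (FR R n)
/-- toll of centred recursion -/
noncomputable def DR (A M : ℕ) (R : ℕ → PowerSeries ℝ) (n : ℕ) (c : Fin n → Fin A) : ℝ :=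
  ∑ a, eR R (cnt c a) - (eR R n - tt n)/M

lemma const_ex (a : ℝ) : constantCoeff (ex a) = 1 := by
  rw [← coeff_zero_eq_constantCoeff_apply, coeff_ex]; simp

lemma const_avp {A n : ℕ} (hA : 0 < A) (f : (Fin n → Fin A) → PowerSeries ℝ)
    (h : ∀ c, constantCoeff (f c) = 1) : constantCoeff (avp A n f) = 1 := by
  rw [← coeff_zero_eq_constantCoeff_apply, coeff_avp]
  simp only [coeff_zero_eq_constantCoeff_apply, h, avr_const hA]

lemma avp_mul_left {A n : ℕ} (g : PowerSeries ℝ) (f : (Fin n → Fin A) → PowerSeries ℝ) :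
    avp A n (fun c => g * f c) = g * avp A n f := by
  simp only [avp, ← Finset.mul_sum]; ring

section
variable {A M : ℕ} {R : ℕ → PowerSeries ℝ}

lemma Sys.Apos (S : Sys A M R) : 0 < A := by have := S.hMA; omega
lemma Sys.Mpos (S : Sys A M R) : 0 < M := by have := S.hM; omega

lemma Sys.eR_rec (S : Sys A M R) (n : ℕ) : eR R n = tt n + (M*A) * Bn (1/(A:ℝ)) n (eR R) := by
  have hs : ∀ k, Sim 1 (R k) 1 (eR R k) := by
    intro k
    have := sim_of_coeff (m := 1) (f := R k) (g := 1) (by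
      intro j hj
      obtain rfl : j = 0 := by omega
      simp [S.const])
    simpa [eR, coeff_one] using this
  have hex : Sim 1 (ex (tt n)) 1 (tt n) := by
    have := sim_of_coeff (m := 1) (f := ex (tt n)) (g := 1) (by
      intro j hj
      obtain rfl : j = 0 := by omega
      simp [const_ex])
    simpa [coeff_one, coeff_ex] using this
  have h1 := Sim.avp (A := A) (n := n) _ _ _ (fun c => Sim.prod le_rfl Finset.univ (fun a => R (cnt c a)) (fun _ => 1)
    (fun a => eR R (cnt c a)) (fun a _ => hs _) (fun _ _ => by simp))
  simp only [Finset.prod_const_one] at h1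
  rw [avp_const S.Apos, avr_sum_cnt S.Apos] at h1
  have h2 := hex.mul le_rfl (h1.pow le_rfl (by simp) M) (by simp) (by simp)
  rw [← S.hrec n] at h2
  have := h2.coeff_eq
  simp [coeff_one] at this
  unfold eR at *
  rw [this]; simp; ring

lemma Sys.FR_const (S : Sys A M R) (n : ℕ) : constantCoeff (FR R n) = 1 := by
  simp [FR, const_ex, S.const]

lemma Sys.FR_one (S : Sys A M R) (n : ℕ) : coeff 1 (FR R n) = 0 := by
  have h : Finset.HasAntidiagonal.antidiagonal 1 = {((0:ℕ),(1:ℕ)),(1,0)} := by decide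
  rw [FR, coeff_mul, h]
  simp [coeff_ex, const_ex, S.const, eR]

lemma Sys.FR_rec (S : Sys A M R) (n : ℕ) :
    FR R n = (avp A n (fun c => ex (DR A M R n c) * ∏ a, FR R (cnt c a)))^M := by
  have hM : (M:ℝ) ≠ 0 := by have := S.Mpos; positivity
  have h1 : ∀ c : Fin n → Fin A, ex (DR A M R n c) * ∏ a, FR R (cnt c a)
      = ex (-((eR R n - tt n)/M)) * ∏ a, R (cnt c a) := by
    intro c
    simp only [FR]
    rw [Finset.prod_mul_distrib, ← ex_sum, ← mul_assoc, ← ex_add]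
    congr 2
    simp only [DR, Finset.sum_neg_distrib]; ring
  simp only [h1]
  rw [avp_mul_left, mul_pow, ← ex_nsmul, FR]
  conv_lhs => rw [S.hrec n]
  rw [← mul_assoc, ← ex_add]
  congr 2
  field_simp; ring

lemma Sys.avr_DR (S : Sys A M R) (n : ℕ) : avr A n (DR A M R n) = 0 := by
  have hM : (M:ℝ) ≠ 0 := by have := S.Mpos; positivity
  have : (DR A M R n) = fun c => ∑ a, eR R (cnt c a) + (-((eR R n - tt n)/M)) := by
    ext c; simp [DR]; ring
  rw [this, avr_add, avr_const S.Apos, avr_sum_cnt S.Apos, S.eR_rec n]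
  field_simp; ring

lemma Sys.vR_nonneg (S : Sys A M R) (n : ℕ) : 0 ≤ vR R n := by
  have := S.vnn n
  unfold vR FR eR; linarith

lemma Sys.FR_zero (S : Sys A M R) : FR R 0 = 1 := by
  have : eR R 0 = 0 := by simp [eR, S.zero, coeff_one]
  simp [FR, this, ex_zero, S.zero]

lemma Sys.FR_one' (S : Sys A M R) : FR R 1 = 1 := by
  have : eR R 1 = 0 := by simp [eR, S.one, coeff_one]
  simp [FR, this, ex_zero, S.one]

/-- general step: isolate the top coefficient -/
lemma Sys.FR_sim (S : Sys A M R) {m : ℕ} (hm : 1 ≤ m) (x : ℕ → ℝ) (H : ℕ → PowerSeries ℝ)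
    (h : ∀ k, Sim m (FR R k) (H k) (x k)) (hH : ∀ k, constantCoeff (H k) = 1) (n : ℕ) :
    Sim m (FR R n) ((avp A n (fun c => ex (DR A M R n c) * ∏ a, H (cnt c a)))^M)
      ((M*A) * Bn (1/(A:ℝ)) n x) := by
  have h1 := Sim.avp (A := A) (n := n) _ _ _ (fun c => (Sim.refl m (ex (DR A M R n c))).mul hm
    (Sim.prod hm Finset.univ (fun a => FR R (cnt c a)) (fun a => H (cnt c a))
    (fun a => x (cnt c a)) (fun a _ => h _) (fun _ _ => hH _)) (const_ex _) (by simp [map_prod, hH]))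
  simp only [zero_add] at h1
  rw [avr_sum_cnt S.Apos] at h1
  have h2 := h1.pow hm (const_avp S.Apos _ (by intro c; simp [map_prod, hH, const_ex])) M
  rw [← S.FR_rec n] at h2
  rwa [← mul_assoc] at h2

lemma Sys.vR_rec (S : Sys A M R) (n : ℕ) :
    vR R n = (M*A) * Bn (1/(A:ℝ)) n (vR R) + M * avr A n (fun c => (DR A M R n c)^2) := by
  have hs : ∀ k, Sim 2 (FR R k) 1 (vR R k / 2) := by
    intro k
    have := sim_of_coeff (m := 2) (f := FR R k) (g := 1) (by
      intro j hj
      interval_cases j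
      · simp [S.FR_const]
      · simp [S.FR_one, coeff_one])
    simpa [vR, coeff_one] using this
  have h1 := S.FR_sim (by norm_num) _ _ hs (by simp) n
  simp only [Finset.prod_const_one, mul_one] at h1
  have h2 : Sim 2 (avp A n (fun c => ex (DR A M R n c))) 1 (avr A n (fun c => (DR A M R n c)^2) / 2) := by
    have := sim_of_coeff (m := 2) (f := avp A n (fun c => ex (DR A M R n c))) (g := 1) (by
      intro j hj
      interval_cases j
      · simp [const_avp S.Apos, const_ex]
      · rw [coeff_avp]; simp only [coeff_ex, coeff_one]; simp [S.avr_DR])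
    rw [coeff_avp] at this
    simp only [coeff_ex, coeff_one] at this
    have e : (fun c => DR A M R n c ^ 2 / (Nat.factorial 2:ℝ)) = fun c => (1/2:ℝ) * DR A M R n c ^ 2 := by
      ext c; simp [Nat.factorial]; ring
    rw [e, avr_mul] at this
    convert this using 1
    simp; ring
  have h3 := h2.pow (by norm_num) (by simp) M
  have e1 := h1.coeff_eq
  have e3 := h3.coeff_eq
  have e4 : (fun k => vR R k / 2) = fun k => (1/2:ℝ) * vR R k := by ext; ring
  rw [e4, Bn_mul] at e1
  rw [e3] at e1
  simp [coeff_one] at e1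
  unfold vR at *
  rw [e1]; ring

end
end GT


namespace GT
open PowerSeries

/-- exponent kappa -/
noncomputable def kap (A M : ℕ) : ℝ := Real.logb A M

section
variable {A M : ℕ} {R : ℕ → PowerSeries ℝ}

lemma Sys.A1 (S : Sys A M R) : (1:ℝ) < A := by have := S.hM; have := S.hMA; exact_mod_cast (by omega : 1 < A)
lemma Sys.kap_pos (S : Sys A M R) : 0 < kap A M := Real.logb_pos S.A1 (by have := S.hM; exact_mod_cast (by omega : 1 < M))
lemma Sys.kap_lt (S : Sys A M R) : kap A M < 1 := by
  unfold kap
  rw [Real.logb_lt_iff_lt_rpow S.A1 (by have := S.hM; exact_mod_cast (by omega : 0 < M)), Real.rpow_one]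
  exact_mod_cast S.hMA
lemma Sys.A_kap (S : Sys A M R) : (A:ℝ)^(kap A M) = M :=
  Real.rpow_logb (by linarith [S.A1]) (by linarith [S.A1]) (by have := S.hM; exact_mod_cast (by omega : 0 < M))

/-- all contraction constants are powers of A -/
lemma Sys.con_lt (S : Sys A M R) (x s : ℝ) (h : x < s) : (A:ℝ)^x * (1/(A:ℝ))^s < 1 := by
  have hA := S.A1
  rw [one_div, Real.inv_rpow (by linarith), ← div_eq_mul_inv, ← Real.rpow_sub (by linarith)]
  exact Real.rpow_lt_one_of_one_lt_of_neg hA (by linarith)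

lemma Sys.MA_eq (S : Sys A M R) : (M:ℝ)*A = (A:ℝ)^(1+kap A M) := by
  rw [Real.rpow_add (by linarith [S.A1]), S.A_kap, Real.rpow_one, mul_comm]
lemma Sys.MdA_eq (S : Sys A M R) : (M:ℝ)/A = (A:ℝ)^(kap A M - 1) := by
  rw [Real.rpow_sub (by linarith [S.A1]), S.A_kap, Real.rpow_one]

lemma Sys.q0 (S : Sys A M R) : 0 < 1/(A:ℝ) := by have := S.A1; positivity
lemma Sys.q1 (S : Sys A M R) : 1/(A:ℝ) ≤ 1 := by
  have := S.A1
  rw [div_le_one (by linarith)]; linarith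
lemma Sys.q1' (S : Sys A M R) : 1/(A:ℝ) < 1 := by
  have := S.A1
  rw [div_lt_one (by linarith)]; linarith

lemma Sys.d2e_rec (S : Sys A M R) (n : ℕ) : (eR R (n+2) - eR R (n+1)) - (eR R (n+1) - eR R n)
    = ((tt (n+2) - tt (n+1)) - (tt (n+1) - tt n)) +
      (M/A) * Bn (1/(A:ℝ)) n (fun k => (eR R (k+2) - eR R (k+1)) - (eR R (k+1) - eR R k)) := by
  have h1 : ∀ n, eR R (n+1) - eR R n = (tt (n+1) - tt n) + M * Bn (1/(A:ℝ)) n (fun k => eR R (k+1) - eR R k) := by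
    intro n
    have := Bn_diff (1/(A:ℝ)) n (eR R)
    have hA := S.A1
    rw [S.eR_rec n, S.eR_rec (n+1)]
    have e : (M:ℝ) * Bn (1/(A:ℝ)) n (fun k => eR R (k+1) - eR R k)
      = (M*A) * (1/(A:ℝ) * Bn (1/(A:ℝ)) n (fun k => eR R (k+1) - eR R k)) := by field_simp
    rw [e, ← this]; ring
  have := Bn_diff (1/(A:ℝ)) n (fun k => eR R (k+1) - eR R k)
  rw [h1 (n+1), h1 n]
  have e : ∀ x : ℝ, (M:ℝ)/A * x = M * (1/(A:ℝ) * x) := by intro x; ring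
  rw [e, ← this]; ring

lemma Sys.d2e_bound (S : Sys A M R) : ∃ C, 0 ≤ C ∧ ∀ n : ℕ,
    |(eR R (n+2) - eR R (n+1)) - (eR R (n+1) - eR R n)| ≤ C * ((n:ℝ)+1)^(((kap A M)^2-1)/2) := by
  have hk0 := S.kap_pos
  have hk1 := S.kap_lt
  apply contract_O S.q0 S.q1 _ (by nlinarith) (M/A) (by positivity) ?_
    (fun n => (eR R (n+2) - eR R (n+1)) - (eR R (n+1) - eR R n)) 2 0 le_rfl
  · intro n hn
    rw [S.d2e_rec n]
    have : ((tt (n+2) - tt (n+1)) - (tt (n+1) - tt n)) = 0 := by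
      simp [tt, hn, show 2 ≤ n+1 by omega]
    rw [this, zero_add, abs_mul, abs_of_nonneg (by positivity : (0:ℝ) ≤ M/A), zero_mul, add_zero]
    gcongr
    exact Bn_abs S.q0.le S.q1 _ _
  · rw [S.MdA_eq]
    apply S.con_lt
    nlinarith [sq_pos_of_pos (sub_pos.2 hk1)]
end

lemma taylor_bound (f : ℕ → ℝ) (B : ℝ) (h : ∀ j, |(f (j+2) - f (j+1)) - (f (j+1) - f j)| ≤ B) (l k : ℕ) :
    |f l - f k - ((l:ℝ)-k) * (f (k+1) - f k)| ≤ B * ((l:ℝ)-k)^2 := by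
  have hB : 0 ≤ B := (abs_nonneg _).trans (h 0)
  rcases le_total k l with hkl | hkl
  · obtain ⟨d, rfl⟩ := Nat.exists_eq_add_of_le hkl
    have h1 : ∀ d : ℕ, |(f (k+d+1) - f (k+d)) - (f (k+1) - f k)| ≤ B * d := by
      intro d
      induction d with
      | zero => simp
      | succ d ih =>
        have := h (k+d)
        have e : (f (k+(d+1)+1) - f (k+(d+1))) - (f (k+1) - f k)
          = ((f (k+d+2) - f (k+d+1)) - (f (k+d+1) - f (k+d))) + ((f (k+d+1) - f (k+d)) - (f (k+1) - f k)) := by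
          rw [show k+(d+1)+1 = k+d+2 by ring, show k+(d+1) = k+d+1 by ring]; ring
        rw [e]
        refine (abs_add_le _ _).trans ?_
        push_cast; linarith
    have h2 : ∀ d : ℕ, |f (k+d) - f k - d * (f (k+1) - f k)| ≤ B * (d:ℝ)^2 := by
      intro d
      induction d with
      | zero => simp
      | succ d ih =>
        have e : f (k+(d+1)) - f k - ((d+1:ℕ):ℝ) * (f (k+1) - f k)
          = ((f (k+d+1) - f (k+d)) - (f (k+1) - f k)) + (f (k+d) - f k - d * (f (k+1) - f k)) := by
          rw [show k+(d+1) = k+d+1 by ring]; push_cast; ring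
        rw [e]
        refine (abs_add_le _ _).trans ?_
        have := h1 d
        push_cast
        nlinarith [mul_nonneg hB (Nat.cast_nonneg (α := ℝ) d)]
    have := h2 d
    push_cast
    rw [add_sub_cancel_left]; exact this
  · obtain ⟨d, rfl⟩ := Nat.exists_eq_add_of_le hkl
    have h2 : ∀ d : ℕ, |f l - f (l+d) + d * (f (l+d+1) - f (l+d))| ≤ B * (d:ℝ)^2 := by
      intro d
      induction d with
      | zero => simp
      | succ d ih =>
        have e : f l - f (l+(d+1)) + ((d+1:ℕ):ℝ) * (f (l+(d+1)+1) - f (l+(d+1)))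
          = (f l - f (l+d) + d * (f (l+d+1) - f (l+d))) +
            (d+1) * ((f (l+d+2) - f (l+d+1)) - (f (l+d+1) - f (l+d))) := by
          rw [show l+(d+1)+1 = l+d+2 by ring, show l+(d+1) = l+d+1 by ring]; push_cast; ring
        rw [e]
        refine (abs_add_le _ _).trans ?_
        rw [abs_mul, abs_of_nonneg (by positivity : (0:ℝ) ≤ (d:ℝ)+1)]
        have := mul_le_mul_of_nonneg_left (h (l+d)) (by positivity : (0:ℝ) ≤ (d:ℝ)+1)
        push_cast
        nlinarith [mul_nonneg hB (Nat.cast_nonneg (α := ℝ) d)]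
    have := h2 d
    push_cast
    convert this using 2 <;> ring

lemma min_pow_bound (A : ℕ) (hA : 2 ≤ A) (s : ℝ) (hs : -1 ≤ s) (hs0 : s ≤ 0) (n l : ℕ) :
    ((min l (n/A) : ℕ) + 1 : ℝ)^s ≤ 4*(A:ℝ)^2 * ((n:ℝ)+1)^s * (1 + ((l:ℝ) - (n/A:ℕ))^2/((n:ℝ)+1)) := by
  have hA' : (2:ℝ) ≤ A := by exact_mod_cast hA
  set k := n/A with hk
  have hkn : (n:ℝ)+1 ≤ A * ((k:ℝ)+1) := by
    have : n < A * (k+1) := by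
      have := Nat.lt_mul_div_succ n (by omega : 0 < A); simpa using this
    exact_mod_cast this
  have n1 : (1:ℝ) ≤ (n:ℝ)+1 := by linarith [Nat.cast_nonneg (α := ℝ) n]
  have k1 : (1:ℝ) ≤ (k:ℝ)+1 := by linarith [Nat.cast_nonneg (α := ℝ) k]
  have hlow : ∀ x : ℝ, ((n:ℝ)+1)/(2*A) ≤ x → x^s ≤ (2*A) * ((n:ℝ)+1)^s := by
    intro x hx
    calc x^s ≤ (((n:ℝ)+1)/(2*A))^s := Real.rpow_le_rpow_of_nonpos (by positivity) hx hs0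
      _ = ((2:ℝ)*A)^(-s) * ((n:ℝ)+1)^s := by
        rw [Real.div_rpow (by positivity) (by positivity), Real.rpow_neg (by positivity)]; field_simp
      _ ≤ ((2:ℝ)*A)^(1:ℝ) * ((n:ℝ)+1)^s := by
        gcongr
        · linarith
        · linarith
      _ = _ := by rw [Real.rpow_one]
  have hz : 0 ≤ ((l:ℝ) - k)^2/((n:ℝ)+1) := by positivity
  have hp : 0 < ((n:ℝ)+1)^s := by positivity
  by_cases hcase : ((n:ℝ)+1)/(2*A) ≤ (min l k : ℕ) + 1
  · refine (hlow _ hcase).trans ?_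
    have : (2*A) * ((n:ℝ)+1)^s ≤ (4*(A:ℝ)^2 * ((n:ℝ)+1)^s) * 1 := by
      rw [mul_one]
      have h24 : (2*(A:ℝ)) ≤ 4*(A:ℝ)^2 := by nlinarith
      gcongr
    refine this.trans ?_
    gcongr; linarith
  · push Not at hcase
    have hlk : l < k := by
      by_contra hcon
      rw [min_eq_right (by omega)] at hcase
      rw [lt_div_iff₀ (by positivity)] at hcase
      nlinarith
    rw [min_eq_left hlk.le] at hcase ⊢
    have a1 : ((l:ℝ)+1)^s ≤ 1 := Real.rpow_le_one_of_one_le_of_nonpos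
      (by linarith [Nat.cast_nonneg (α := ℝ) l]) hs0
    have a2 : ((n:ℝ)+1)/(2*A) ≤ (k:ℝ) - l := by
      have : ((n:ℝ)+1)/(2*A) + ((n:ℝ)+1)/(2*A) ≤ k + 1 := by
        rw [← add_div, div_le_iff₀ (by positivity)]; linarith
      linarith
    have a3 : (((n:ℝ)+1)/(2*A))^2 ≤ ((l:ℝ)-k)^2 := by
      rw [show ((l:ℝ)-k)^2 = ((k:ℝ)-l)^2 by ring]
      gcongr
    have a4 : ((n:ℝ)+1) ≤ 4*(A:ℝ)^2 * (((l:ℝ)-k)^2/((n:ℝ)+1)) := by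
      rw [← mul_div_assoc, le_div_iff₀ (by positivity)]
      calc ((n:ℝ)+1)*((n:ℝ)+1) = 4*(A:ℝ)^2 * (((n:ℝ)+1)/(2*A))^2 := by field_simp; ring
        _ ≤ _ := by gcongr
    have a5 : 1 ≤ ((n:ℝ)+1)^s * ((n:ℝ)+1) := by
      have : ((n:ℝ)+1)^s * ((n:ℝ)+1) = ((n:ℝ)+1)^(s+1) := by
        rw [Real.rpow_add (by positivity), Real.rpow_one]
      rw [this]
      exact Real.one_le_rpow n1 (by linarith)
    calc ((l:ℝ)+1)^s ≤ 1 := a1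
      _ ≤ ((n:ℝ)+1)^s * ((n:ℝ)+1) := a5
      _ ≤ ((n:ℝ)+1)^s * (4*(A:ℝ)^2 * (((l:ℝ)-k)^2/((n:ℝ)+1))) := by gcongr
      _ ≤ _ := by
        have : 0 ≤ 4*(A:ℝ)^2 * ((n:ℝ)+1)^s := by positivity
        nlinarith
end GT


namespace GT
open PowerSeries

lemma pow_add_le (a b : ℝ) (ha : 0 ≤ a) (hb : 0 ≤ b) (j : ℕ) : (a+b)^j ≤ 2^j * (a^j + b^j) := by
  rcases le_total a b with h | h
  · calc (a+b)^j ≤ (2*b)^j := by gcongr; linarith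
      _ = 2^j * b^j := mul_pow _ _ _
      _ ≤ _ := by gcongr; linarith [pow_nonneg ha j]
  · calc (a+b)^j ≤ (2*a)^j := by gcongr; linarith
      _ = 2^j * a^j := mul_pow _ _ _
      _ ≤ _ := by gcongr; linarith [pow_nonneg hb j]

lemma pow_sum_le {A : ℕ} (hA : 0 < A) (x : Fin A → ℝ) (hx : ∀ a, 0 ≤ x a) (j : ℕ) :
    (∑ a, x a)^j ≤ (A:ℝ)^j * ∑ a, (x a)^j := by
  have hA1 : (1:ℝ) ≤ A := by exact_mod_cast hA
  cases j with
  | zero => simp; exact_mod_cast hA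
  | succ j =>
    have := pow_sum_div_card_le_sum_pow (s := Finset.univ) (f := x) (fun i _ => hx i) j
    rw [div_le_iff₀ (by simp; positivity)] at this
    simp only [Finset.card_univ, Fintype.card_fin] at this
    have h0 : 0 ≤ ∑ a, (x a)^(j+1) := Finset.sum_nonneg fun a _ => pow_nonneg (hx a) _
    calc _ ≤ _ := this
      _ = (A:ℝ)^j * ∑ a, (x a)^(j+1) := mul_comm _ _
      _ ≤ _ := by gcongr; omega

/-- second order remainder -/
noncomputable def Qf (e : ℕ → ℝ) (k l : ℕ) : ℝ := e l - e k - ((l:ℝ)-k) * (e (k+1) - e k)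

lemma Qf_bound (A : ℕ) (hA : 2 ≤ A) (s : ℝ) (hs : -1 ≤ s) (hs0 : s ≤ 0) (e : ℕ → ℝ) (C : ℝ) (hC : 0 ≤ C)
    (h : ∀ n : ℕ, |(e (n+2) - e (n+1)) - (e (n+1) - e n)| ≤ C * ((n:ℝ)+1)^s) (n l : ℕ) :
    |Qf e (n/A) l| ≤ (4*(A:ℝ)^2*C) * ((n:ℝ)+1)^(1+s) *
      (((l:ℝ) - (n/A:ℕ))^2/((n:ℝ)+1) + (((l:ℝ) - (n/A:ℕ))^2/((n:ℝ)+1))^2) := by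
  set k := n/A with hk
  set μ := min l k with hμ
  have t := taylor_bound (fun j => e (μ + j)) (C * ((μ:ℝ)+1)^s) (by
    intro j
    have := h (μ+j)
    refine (this.trans ?_)
    gcongr C * ?_
    apply Real.rpow_le_rpow_of_nonpos (by positivity) (by push_cast; linarith [Nat.cast_nonneg (α := ℝ) j]) hs0)
    (l-μ) (k-μ)
  have e1 : μ + (l-μ) = l := by omega
  have e2 : μ + (k-μ) = k := by omega
  have e3 : μ + (k-μ+1) = k+1 := by omega
  have e4 : (((l-μ:ℕ):ℝ) - ((k-μ:ℕ):ℝ)) = (l:ℝ) - k := by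
    rw [Nat.cast_sub (by omega), Nat.cast_sub (by omega)]; ring
  rw [e1, e2, e3, e4] at t
  have m := min_pow_bound A hA s hs hs0 n l
  rw [← hk, ← hμ] at m
  refine t.trans ?_
  have n1 : (0:ℝ) < (n:ℝ)+1 := by positivity
  calc C * ((μ:ℝ)+1)^s * ((l:ℝ)-k)^2
      ≤ C * (4*(A:ℝ)^2 * ((n:ℝ)+1)^s * (1 + ((l:ℝ) - k)^2/((n:ℝ)+1))) * ((l:ℝ)-k)^2 := by gcongr
    _ = _ := by
      rw [Real.rpow_add n1, Real.rpow_one]; field_simp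

section
variable {A M : ℕ} {R : ℕ → PowerSeries ℝ}

lemma Sys.A2 (S : Sys A M R) : 2 ≤ A := by have := S.hM; have := S.hMA; omega

lemma Sys.DR_eq (S : Sys A M R) (n : ℕ) (c : Fin n → Fin A) :
    DR A M R n c = ∑ a, (Qf (eR R) (n/A) (cnt c a) - Bn (1/(A:ℝ)) n (Qf (eR R) (n/A))) := by
  have hM : (M:ℝ) ≠ 0 := by have := S.Mpos; positivity
  have hA := S.A1
  have hAA : (A:ℝ) ≠ 0 := by linarith
  set k := n/A
  have e1 : Bn (1/(A:ℝ)) n (Qf (eR R) k)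
      = Bn (1/(A:ℝ)) n (eR R) - eR R k - (n*(1/(A:ℝ)) - k) * (eR R (k+1) - eR R k) := by
    have : Qf (eR R) k = fun l => (eR R l - eR R k) - (eR R (k+1) - eR R k) * ((l:ℝ)-k) := by
      ext l; unfold Qf; ring
    rw [this, Bn_sub, Bn_sub, Bn_mul, Bn_sub, Bn_id, Bn_const, Bn_const]; ring
  have e2 : ∑ a, ((cnt c a : ℕ):ℝ) = n := by exact_mod_cast cnt_sum c
  have e3 : ∑ a, Qf (eR R) k (cnt c a) = ∑ a, eR R (cnt c a) - A * eR R k - (n - A*k) * (eR R (k+1) - eR R k) := by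
    unfold Qf
    rw [Finset.sum_sub_distrib, Finset.sum_sub_distrib, ← Finset.sum_mul, Finset.sum_sub_distrib, e2]
    simp
  rw [Finset.sum_sub_distrib, e3, e1, DR]
  have := S.eR_rec n
  have e4 : (eR R n - tt n)/M = A * Bn (1/(A:ℝ)) n (eR R) := by rw [this]; field_simp; ring
  rw [e4]
  simp
  field_simp
  ring

lemma Sys.DR_moment (S : Sys A M R) (j : ℕ) : ∃ C, 0 ≤ C ∧ ∀ n : ℕ,
    avr A n (fun c => |DR A M R n c|^j) ≤ C * ((((n:ℝ)+1)^((1+(kap A M)^2)/2)))^j := by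
  obtain ⟨C, hC, hb⟩ := S.d2e_bound
  have hk0 := S.kap_pos
  have hk1 := S.kap_lt
  have hq := fun n l => Qf_bound A S.A2 _ (by nlinarith) (by nlinarith) (eR R) C hC hb n l
  rw [show 1 + ((kap A M)^2-1)/2 = (1+(kap A M)^2)/2 by ring] at hq
  set z := (1+(kap A M)^2)/2
  let Z : ℕ → ℕ → ℝ := fun n l => ((l:ℝ) - (n/A:ℕ))^2/((n:ℝ)+1) + (((l:ℝ) - (n/A:ℕ))^2/((n:ℝ)+1))^2
  have hZ0 : ∀ n l, 0 ≤ Z n l := fun n l => by positivity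
  have hZ : ∀ j : ℕ, ∃ c, 0 ≤ c ∧ ∀ n, Bn (1/(A:ℝ)) n (fun l => (Z n l)^j) ≤ c := by
    intro j
    refine ⟨2^j * ((2*j).factorial * (2 * Real.exp 1 * Real.exp 1)
      + (2*(2*j)).factorial * (2 * Real.exp 1 * Real.exp 1)), by positivity, fun n => ?_⟩
    calc Bn (1/(A:ℝ)) n (fun l => (Z n l)^j)
        ≤ Bn (1/(A:ℝ)) n (fun l => 2^j * ((((l:ℝ) - (n/A:ℕ))^2/((n:ℝ)+1))^j + (((l:ℝ) - (n/A:ℕ))^2/((n:ℝ)+1))^(2*j))) := by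
          apply Bn_mono S.q0.le S.q1
          intro l _
          rw [pow_mul]
          exact pow_add_le _ _ (by positivity) (by positivity) j
      _ ≤ _ := by
          rw [Bn_mul, Bn_add]
          have := Bn_zeta A S.A2 j n
          have := Bn_zeta A S.A2 (2*j) n
          gcongr
  obtain ⟨Z1, hZ1, hZ1'⟩ := hZ 1
  obtain ⟨Zj, hZj, hZj'⟩ := hZ j
  simp only [pow_one] at hZ1'
  refine ⟨(4*(A:ℝ)^2*C)^j * A^j * 2^j * (A * (Zj + Z1^j)), by positivity, fun n => ?_⟩
  set b := (4*(A:ℝ)^2*C) * ((n:ℝ)+1)^z with hbdef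
  have hb0 : 0 ≤ b := by positivity
  have hBQ : |Bn (1/(A:ℝ)) n (Qf (eR R) (n/A))| ≤ b * Z1 := by
    refine (Bn_abs S.q0.le S.q1 _ _).trans ?_
    calc _ ≤ Bn (1/(A:ℝ)) n (fun l => b * Z n l) := Bn_mono S.q0.le S.q1 _ _ _ fun l _ => hq n l
      _ = b * Bn (1/(A:ℝ)) n (fun l => Z n l) := Bn_mul _ _ _ _
      _ ≤ _ := by gcongr; exact hZ1' n
  have hD : ∀ c : Fin n → Fin A, |DR A M R n c|^j
      ≤ (b^j * A^j * 2^j) * ∑ a, ((Z n (cnt c a))^j + Z1^j) := by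
    intro c
    have h1 : |DR A M R n c| ≤ b * ∑ a, (Z n (cnt c a) + Z1) := by
      rw [S.DR_eq, Finset.mul_sum]
      refine (Finset.abs_sum_le_sum_abs _ _).trans (Finset.sum_le_sum fun a _ => ?_)
      refine (abs_sub _ _).trans ?_
      rw [mul_add]
      exact add_le_add (hq n _) hBQ
    calc |DR A M R n c|^j ≤ (b * ∑ a, (Z n (cnt c a) + Z1))^j := by gcongr
      _ = b^j * (∑ a, (Z n (cnt c a) + Z1))^j := mul_pow _ _ _
      _ ≤ b^j * (A^j * ∑ a, (Z n (cnt c a) + Z1)^j) := by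
        gcongr
        exact pow_sum_le S.Apos _ (fun a => add_nonneg (hZ0 _ _) hZ1) j
      _ ≤ b^j * (A^j * ∑ a, 2^j * ((Z n (cnt c a))^j + Z1^j)) := by
        gcongr with a
        exact pow_add_le _ _ (hZ0 _ _) hZ1 j
      _ = _ := by rw [← Finset.mul_sum]; ring
  refine (avr_mono _ _ hD).trans ?_
  rw [avr_mul, avr_sum_cnt S.Apos (f := fun l => (Z n l)^j + Z1^j), Bn_add, Bn_const]
  have : b^j = (4*(A:ℝ)^2*C)^j * (((n:ℝ)+1)^z)^j := mul_pow _ _ _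
  rw [this]
  have h3 := hZj' n
  calc _ ≤ (4*(A:ℝ)^2*C)^j * (((n:ℝ)+1)^z)^j * A^j * 2^j * (A * (Zj + Z1^j)) := by gcongr
    _ = _ := by ring

lemma Sys.vR_bound (S : Sys A M R) : ∃ C, 0 ≤ C ∧ ∀ n : ℕ, vR R n ≤ C * ((n:ℝ)+1)^(1+kap A M) := by
  obtain ⟨C, hC, hb⟩ := S.DR_moment 2
  have hk0 := S.kap_pos
  have hk1 := S.kap_lt
  have hA := S.A1
  have hM2 := S.hMA
  refine critical_O A S.A2 (M*A) ?_ ?_ (1+kap A M) (by linarith) (by linarith) S.MA_eq.symm (1+(kap A M)^2)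
    (by nlinarith) (by nlinarith) (vR R) ?_ ?_ S.vR_nonneg (M*C) (by positivity) ?_
  · have : (M:ℝ) < A := by exact_mod_cast hM2
    nlinarith
  · have := S.Mpos; positivity
  · simp [vR, S.FR_zero, coeff_one]
  · simp [vR, S.FR_one', coeff_one]
  · intro n
    rw [S.vR_rec n]
    have := hb n
    simp only [sq_abs] at this
    have e : ((((n:ℝ)+1)^((1+(kap A M)^2)/2)))^2 = ((n:ℝ)+1)^(1+(kap A M)^2) := by
      rw [← Real.rpow_natCast, ← Real.rpow_mul (by positivity)]; congr 1; push_cast; ring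
    rw [e] at this
    have := mul_le_mul_of_nonneg_left this (Nat.cast_nonneg (α := ℝ) M)
    linarith
end
end GT


namespace GT
open PowerSeries

/-- little-o in a uniform form -/
def Lo (s : ℝ) (x : ℕ → ℝ) : Prop := ∀ η > 0, ∃ C, 0 ≤ C ∧ ∀ n : ℕ, |x n| ≤ η * ((n:ℝ)+1)^s + C

lemma Lo.mono {s : ℝ} {x y : ℕ → ℝ} (h : Lo s y) (hxy : ∀ n, |x n| ≤ |y n|) : Lo s x := by
  intro η hη
  obtain ⟨C, hC, h⟩ := h η hη
  exact ⟨C, hC, fun n => (hxy n).trans (h n)⟩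

lemma Lo.add {s : ℝ} {x y : ℕ → ℝ} (h : Lo s x) (h' : Lo s y) : Lo s (fun n => x n + y n) := by
  intro η hη
  obtain ⟨C, hC, h⟩ := h (η/2) (by positivity)
  obtain ⟨C', hC', h'⟩ := h' (η/2) (by positivity)
  refine ⟨C+C', by positivity, fun n => (abs_add_le _ _).trans ?_⟩
  have := h n
  have := h' n
  linarith

lemma Lo.cmul {s : ℝ} {x : ℕ → ℝ} (h : Lo s x) (k : ℝ) : Lo s (fun n => k * x n) := by
  intro η hη
  obtain ⟨C, hC, h⟩ := h (η/(|k|+1)) (by positivity)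
  refine ⟨(|k|+1) * C, by positivity, fun n => ?_⟩
  rw [abs_mul]
  calc |k| * |x n| ≤ (|k|+1) * (η/(|k|+1) * ((n:ℝ)+1)^s + C) := by
        gcongr
        · linarith
        · exact h n
    _ = _ := by field_simp

lemma Lo.of_bound {s' s : ℝ} (h0 : 0 ≤ s') (hs : s' < s) (C : ℝ) (hC : 0 ≤ C) {x : ℕ → ℝ}
    (h : ∀ n : ℕ, |x n| ≤ C * ((n:ℝ)+1)^s') : Lo s x := by
  intro η hη
  have ht : Tendsto (fun n : ℕ => ((n:ℝ)+1)^(s-s')) atTop atTop :=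
    (tendsto_rpow_atTop (by linarith)).comp
      (tendsto_atTop_add_const_right _ _ tendsto_natCast_atTop_atTop)
  obtain ⟨n0, hn0⟩ := eventually_atTop.1 (ht.eventually_ge_atTop (C/η))
  obtain ⟨C', hC', hb⟩ := exists_bound x n0
  refine ⟨C', hC', fun n => ?_⟩
  by_cases hn : n < n0
  · have := hb n hn
    have : 0 ≤ η * ((n:ℝ)+1)^s := by positivity
    linarith
  · have h1 := hn0 n (by omega)
    rw [div_le_iff₀ hη] at h1
    calc |x n| ≤ C * ((n:ℝ)+1)^s' := h n
      _ ≤ (((n:ℝ)+1)^(s-s') * η) * ((n:ℝ)+1)^s' := by gcongr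
      _ = η * ((n:ℝ)+1)^s := by
        rw [show s = (s-s')+s' by ring, Real.rpow_add (by positivity)]; ring_nf
      _ ≤ _ := by linarith

lemma Bn_absdev (q : ℝ) (h0 : 0 ≤ q) (h1 : q ≤ 1) (n : ℕ) (y Z : ℝ)
    (h : Bn q n (fun k => ((k:ℝ)-y)^2) ≤ Z * ((n:ℝ)+1)) :
    Bn q n (fun k => |(k:ℝ)-y|) ≤ (Z+1)/2 * Real.sqrt ((n:ℝ)+1) := by
  set τ := Real.sqrt ((n:ℝ)+1) with hτ
  have hp : 0 < τ := Real.sqrt_pos.2 (by positivity)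
  have hsq : τ * τ = (n:ℝ)+1 := Real.mul_self_sqrt (by positivity)
  calc Bn q n (fun k => |(k:ℝ)-y|) ≤ Bn q n (fun k => (1/(2*τ)) * ((k:ℝ)-y)^2 + τ/2) := by
        apply Bn_mono h0 h1
        intro k _
        rw [← sq_abs]
        have := sq_nonneg (|(k:ℝ)-y| - τ)
        have e : (1/(2*τ)) * |(k:ℝ)-y|^2 + τ/2 - |(k:ℝ)-y| = (|(k:ℝ)-y| - τ)^2 * (1/(2*τ)) := by
          field_simp; ring
        have : 0 ≤ (|(k:ℝ)-y| - τ)^2 * (1/(2*τ)) := by positivity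
        linarith
    _ = (1/(2*τ)) * Bn q n (fun k => ((k:ℝ)-y)^2) + τ/2 := by rw [Bn_add, Bn_mul, Bn_const]
    _ ≤ (1/(2*τ)) * (Z * (τ*τ)) + τ/2 := by rw [hsq]; gcongr
    _ = _ := by field_simp

lemma diff_lip (f : ℕ → ℝ) (B : ℝ) (n : ℕ) (h : ∀ j < n, |f (j+1) - f j| ≤ B) (k l : ℕ) (hk : k ≤ n) (hl : l ≤ n) :
    |f k - f l| ≤ B * |(k:ℝ) - l| := by
  have key : ∀ d l : ℕ, l + d ≤ n → |f (l+d) - f l| ≤ B * d := by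
    intro d
    induction d with
    | zero => simp
    | succ d ih =>
      intro l hl
      have h1 := ih l (by omega)
      have h2 := h (l+d) (by omega)
      have : f (l+(d+1)) - f l = (f (l+d+1) - f (l+d)) + (f (l+d) - f l) := by
        rw [← add_assoc]; ring
      rw [this]
      refine (abs_add_le _ _).trans ?_
      push_cast; linarith
  rcases le_total l k with h' | h'
  · obtain ⟨d, rfl⟩ := Nat.exists_eq_add_of_le h'
    have := key d l hk
    push_cast
    rw [add_sub_cancel_left, Nat.abs_cast]; exact this
  · obtain ⟨d, rfl⟩ := Nat.exists_eq_add_of_le h'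
    have := key d k hl
    rw [abs_sub_comm, abs_sub_comm (k:ℝ)]
    push_cast
    rw [add_sub_cancel_left, Nat.abs_cast]; exact this

/-- iterates -/
noncomputable def vh (A M : ℕ) (v : ℕ → ℝ) : ℕ → ℕ → ℝ
  | 0 => v
  | (h+1) => fun n => (M*A) * Bn (1/(A:ℝ)) n (vh A M v h)

section
variable {A M : ℕ} {R : ℕ → PowerSeries ℝ}

lemma Sys.rv_bound (S : Sys A M R) : ∃ C, 0 ≤ C ∧ ∀ n : ℕ,
    |vR R n - (M*A) * Bn (1/(A:ℝ)) n (vR R)| ≤ C * ((n:ℝ)+1)^(1+(kap A M)^2) := by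
  obtain ⟨C, hC, hb⟩ := S.DR_moment 2
  refine ⟨M*C, by positivity, fun n => ?_⟩
  have := hb n
  simp only [sq_abs] at this
  have e : ((((n:ℝ)+1)^((1+(kap A M)^2)/2)))^2 = ((n:ℝ)+1)^(1+(kap A M)^2) := by
    rw [← Real.rpow_natCast, ← Real.rpow_mul (by positivity)]; congr 1; push_cast; ring
  rw [e] at this
  have h0 : 0 ≤ avr A n (fun c => (DR A M R n c)^2) := by
    unfold avr
    exact mul_nonneg (by positivity) (Finset.sum_nonneg fun c _ => sq_nonneg _)
  rw [S.vR_rec n, add_sub_cancel_left, abs_of_nonneg (by positivity), mul_assoc]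
  gcongr

lemma Sys.vh_close (S : Sys A M R) (h : ℕ) : ∃ C, 0 ≤ C ∧ ∀ n : ℕ,
    |vR R n - vh A M (vR R) h n| ≤ C * ((n:ℝ)+1)^(1+(kap A M)^2) := by
  induction h with
  | zero => exact ⟨0, le_rfl, fun n => by simp [vh]⟩
  | succ h ih =>
    obtain ⟨C, hC, ih⟩ := ih
    obtain ⟨C', hC', hr⟩ := S.rv_bound
    refine ⟨C' + (M*A)*C, by positivity, fun n => ?_⟩
    have e : vR R n - vh A M (vR R) (h+1) n = (vR R n - (M*A) * Bn (1/(A:ℝ)) n (vR R))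
      + (M*A) * Bn (1/(A:ℝ)) n (fun k => vR R k - vh A M (vR R) h k) := by
      rw [Bn_sub]; simp only [vh]; ring
    rw [e]
    refine (abs_add_le _ _).trans ?_
    rw [add_mul]
    refine add_le_add (hr n) ?_
    rw [abs_mul, abs_of_nonneg (by positivity : (0:ℝ) ≤ M*A), mul_assoc ((M:ℝ)*A)]
    gcongr
    refine (Bn_abs S.q0.le S.q1 _ _).trans ?_
    have := Bn_mono S.q0.le S.q1 n (fun k => |vR R k - vh A M (vR R) h k|) (fun _ => C * ((n:ℝ)+1)^(1+(kap A M)^2))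
      (fun k hk => (ih k).trans (by gcongr))
    rwa [Bn_const] at this

lemma Sys.vh_diff1 (S : Sys A M R) : ∃ B, 0 ≤ B ∧ ∀ n : ℕ,
    |vh A M (vR R) 1 (n+1) - vh A M (vR R) 1 n| ≤ B * ((n:ℝ)+1)^(1+kap A M - 1/2) := by
  obtain ⟨C, hC, hv⟩ := S.vR_bound
  have hk0 := S.kap_pos
  have hk1 := S.kap_lt
  have hq := S.q1'
  refine ⟨(M*A) * (8 * C * (1/(1-1/(A:ℝ)))), ?_, fun n => ?_⟩
  · have : 0 < 1-1/(A:ℝ) := by linarith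
    positivity
  have hq' : 0 < 1-1/(A:ℝ) := by linarith
  simp only [vh]
  rw [← mul_sub, Bn_score _ hq, abs_mul, abs_of_nonneg (by positivity : (0:ℝ) ≤ M*A), mul_assoc ((M:ℝ)*A)]
  gcongr
  rw [abs_div, abs_of_pos (by positivity : 0 < ((n:ℝ)+1)*(1-1/(A:ℝ)))]
  have n0 : (0:ℝ) < (n:ℝ)+1 := by positivity
  have hdev := Bn_absdev (1/(A:ℝ)) S.q0.le S.q1 (n+1) (((n+1:ℕ):ℝ) * (1/(A:ℝ))) 1 (by
    rw [Bn_var]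
    have h1 := S.q0
    have : ((n+1:ℕ):ℝ) * (1/(A:ℝ)) * (1 - 1/(A:ℝ)) ≤ ((n+1:ℕ):ℝ) * 1 * 1 := by
      have hh1 := S.q1
      have hh2 : 1 - 1/(A:ℝ) ≤ 1 := by linarith
      exact mul_le_mul (mul_le_mul_of_nonneg_left hh1 (by positivity)) hh2 (by linarith) (by positivity)
    linarith)
  have hb : |Bn (1/(A:ℝ)) (n+1) (fun k => ((k:ℝ) - ((n:ℝ)+1)*(1/(A:ℝ))) * vR R k)|
      ≤ 8 * C * ((n:ℝ)+1)^(1+kap A M) * Real.sqrt ((n:ℝ)+1) := by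
    refine (Bn_abs S.q0.le S.q1 _ _).trans ?_
    calc _ ≤ Bn (1/(A:ℝ)) (n+1) (fun k => (C * (((n+1:ℕ):ℝ)+1)^(1+kap A M)) * |(k:ℝ) - ((n+1:ℕ):ℝ)*(1/(A:ℝ))|) := by
          apply Bn_mono S.q0.le S.q1
          intro k hk
          rw [abs_mul, abs_of_nonneg (S.vR_nonneg k), mul_comm]
          push_cast
          gcongr
          refine (hv k).trans ?_
          gcongr
          exact_mod_cast hk
      _ ≤ (C * (((n+1:ℕ):ℝ)+1)^(1+kap A M)) * ((1+1)/2 * Real.sqrt (((n+1:ℕ):ℝ)+1)) := by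
          rw [Bn_mul]; gcongr
      _ ≤ (C * (4 * ((n:ℝ)+1)^(1+kap A M))) * (2 * Real.sqrt ((n:ℝ)+1)) := by
          have h2 : (((n+1:ℕ):ℝ)+1) ≤ 2 * ((n:ℝ)+1) := by push_cast; linarith [Nat.cast_nonneg (α := ℝ) n]
          refine mul_le_mul (mul_le_mul_of_nonneg_left ?_ hC) ?_ (by positivity) (by positivity)
          · calc (((n+1:ℕ):ℝ)+1)^(1+kap A M) ≤ (2 * ((n:ℝ)+1))^(1+kap A M) := by gcongr
              _ = 2^(1+kap A M) * ((n:ℝ)+1)^(1+kap A M) := Real.mul_rpow (by norm_num) n0.le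
              _ ≤ 2^(2:ℝ) * ((n:ℝ)+1)^(1+kap A M) := by
                gcongr
                · norm_num
                · linarith
              _ = _ := by norm_num
          · calc (1+1)/2 * Real.sqrt (((n+1:ℕ):ℝ)+1) = Real.sqrt (((n+1:ℕ):ℝ)+1) := by ring
              _ ≤ Real.sqrt (2^2 * ((n:ℝ)+1)) := Real.sqrt_le_sqrt (by linarith)
              _ = _ := by rw [Real.sqrt_mul (by norm_num), Real.sqrt_sq (by norm_num)]
      _ = _ := by ring
  rw [div_le_iff₀ (by positivity)]
  refine hb.trans (le_of_eq ?_)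
  have e : ((n:ℝ)+1)^(1+kap A M - 1/2) * ((n:ℝ)+1) = ((n:ℝ)+1)^(1+kap A M) * Real.sqrt ((n:ℝ)+1) := by
    rw [Real.sqrt_eq_rpow, ← Real.rpow_add n0]
    nth_rewrite 2 [← Real.rpow_one ((n:ℝ)+1)]
    rw [← Real.rpow_add n0]; congr 1; ring
  have : 8 * C * (1/(1-1/(A:ℝ))) * ((n:ℝ)+1)^(1+kap A M - 1/2) * (((n:ℝ)+1)*(1-1/(A:ℝ)))
    = 8 * C * (((n:ℝ)+1)^(1+kap A M - 1/2) * ((n:ℝ)+1)) * ((1/(1-1/(A:ℝ)))*(1-1/(A:ℝ))) := by ring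
  rw [this, e, one_div_mul_cancel hq'.ne']; ring

lemma Sys.vh_diff (S : Sys A M R) : ∀ η > 0, ∃ h : ℕ, ∃ C, 0 ≤ C ∧ ∀ n : ℕ,
    |vh A M (vR R) h (n+1) - vh A M (vR R) h n| ≤ η * ((n:ℝ)+1)^(1+kap A M - 1/2) + C := by
  have hk0 := S.kap_pos
  obtain ⟨θ, hθ0, hθ1, hst⟩ := contract_step S.q0 S.q1 (1+kap A M - 1/2) (by linarith) M (by positivity) (by
    nth_rewrite 1 [← S.A_kap]
    exact S.con_lt _ _ (by linarith))
  obtain ⟨B, hB, h1⟩ := S.vh_diff1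
  have key : ∀ h : ℕ, ∃ C, 0 ≤ C ∧ ∀ n : ℕ,
    |vh A M (vR R) (h+1) (n+1) - vh A M (vR R) (h+1) n| ≤ (θ^h*B) * ((n:ℝ)+1)^(1+kap A M - 1/2) + C := by
    intro h
    induction h with
    | zero => exact ⟨0, le_rfl, fun n => by simpa using h1 n⟩
    | succ h ih =>
      obtain ⟨C, hC, ih⟩ := ih
      obtain ⟨C', hC', h2⟩ := hst (fun n => vh A M (vR R) (h+1) (n+1) - vh A M (vR R) (h+1) n) (θ^h*B) C
        (by positivity) hC ih
      refine ⟨C', hC', fun n => ?_⟩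
      have e : vh A M (vR R) (h+1+1) (n+1) - vh A M (vR R) (h+1+1) n
        = M * Bn (1/(A:ℝ)) n (fun n => vh A M (vR R) (h+1) (n+1) - vh A M (vR R) (h+1) n) := by
        have := Bn_diff (1/(A:ℝ)) n (vh A M (vR R) (h+1))
        have hA := S.A1
        have e : ∀ x : ℝ, (M:ℝ) * x = (M*A) * (1/(A:ℝ) * x) := by intro x; field_simp
        rw [e, ← this]
        conv_lhs => simp only [vh]
        simp only [vh]; ring
      rw [e, abs_mul, Nat.abs_cast]
      refine (mul_le_mul_of_nonneg_left (Bn_abs S.q0.le S.q1 _ _) (by positivity)).trans ?_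
      refine (h2 n).trans (le_of_eq ?_)
      ring
  intro η hη
  obtain ⟨h, hh⟩ := exists_pow_lt_of_lt_one (show 0 < η/(B+1) by positivity) hθ1
  obtain ⟨C, hC, hk⟩ := key h
  refine ⟨h+1, C, hC, fun n => (hk n).trans ?_⟩
  gcongr
  rw [lt_div_iff₀ (by positivity)] at hh
  have : 0 < θ^h := by positivity
  nlinarith

lemma Sys.vdev (S : Sys A M R) : Lo (1+kap A M) (fun n => Bn (1/(A:ℝ)) n (fun k => |vR R k - Bn (1/(A:ℝ)) n (vR R)|)) := by
  have hk0 := S.kap_pos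
  have hk1 := S.kap_lt
  set Z : ℝ := (2*1).factorial * (2 * Real.exp 1 * Real.exp 1) with hZ
  have hZ0 : 0 < Z := by positivity
  have hdev : ∀ n : ℕ, Bn (1/(A:ℝ)) n (fun k => |(k:ℝ)-(n/A:ℕ)|) ≤ (Z+1)/2 * Real.sqrt ((n:ℝ)+1) := by
    intro n
    apply Bn_absdev _ S.q0.le S.q1
    have := Bn_zeta A S.A2 1 n
    have e : (fun k : ℕ => (((k:ℝ) - (n / A : ℕ))^2/((n:ℝ)+1))^1) = fun k : ℕ => (1/((n:ℝ)+1)) * ((k:ℝ) - (n / A : ℕ))^2 := by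
      ext k; ring
    rw [e, Bn_mul, ← hZ, one_div, inv_mul_le_iff₀ (by positivity)] at this
    linarith
  intro η hη
  obtain ⟨h, C, hC, hd⟩ := S.vh_diff (η/(2*(Z+1))) (by positivity)
  obtain ⟨C1, hC1, hc⟩ := S.vh_close h
  obtain ⟨C2, hC2, h2⟩ := Lo.of_bound (s' := 1+(kap A M)^2) (s := 1+kap A M) (by positivity) (by nlinarith) (2*C1) (by positivity)
    (x := fun n => 2 * C1 * ((n:ℝ)+1)^(1+(kap A M)^2)) (fun n => by rw [abs_of_nonneg (by positivity)]) (η/4) (by positivity)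
  obtain ⟨C3, hC3, h3⟩ := Lo.of_bound (s' := 1/2) (s := 1+kap A M) (by positivity) (by nlinarith) ((Z+1)*C) (by positivity)
    (x := fun n => ((Z+1)*C) * ((n:ℝ)+1)^(1/2:ℝ)) (fun n => by rw [abs_of_nonneg (by positivity)]) (η/4) (by positivity)
  refine ⟨C2 + C3, by positivity, fun n => ?_⟩
  rw [abs_of_nonneg (Bn_nonneg S.q0.le S.q1 _ _ fun _ _ => abs_nonneg _)]
  set y := vh A M (vR R) h (n/A) with hy
  have n0 : (0:ℝ) < (n:ℝ)+1 := by positivity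
  set B := η/(2*(Z+1)) * ((n:ℝ)+1)^(1+kap A M - 1/2) + C with hB
  have hB0 : 0 ≤ B := by positivity
  have s1 : Bn (1/(A:ℝ)) n (fun k => |vR R k - y|) ≤ C1 * ((n:ℝ)+1)^(1+(kap A M)^2)
      + B * ((Z+1)/2 * Real.sqrt ((n:ℝ)+1)) := by
    calc _ ≤ Bn (1/(A:ℝ)) n (fun k => C1 * ((n:ℝ)+1)^(1+(kap A M)^2) + B * |(k:ℝ)-(n/A:ℕ)|) := by
          apply Bn_mono S.q0.le S.q1
          intro k hk
          have e : vR R k - y = (vR R k - vh A M (vR R) h k) + (vh A M (vR R) h k - y) := by ring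
          rw [e]
          refine (abs_add_le _ _).trans (add_le_add ((hc k).trans ?_) ?_)
          · gcongr
          · apply diff_lip _ _ n _ _ _ hk (Nat.div_le_self _ _)
            intro j hj
            refine (hd j).trans ?_
            rw [hB]
            have : (0:ℝ) ≤ 1 + kap A M - 1/2 := by linarith
            gcongr
      _ = C1 * ((n:ℝ)+1)^(1+(kap A M)^2) + B * Bn (1/(A:ℝ)) n (fun k => |(k:ℝ)-(n/A:ℕ)|) := by
          rw [Bn_add, Bn_const, Bn_mul]
      _ ≤ _ := by gcongr; exact hdev n
  have s2 : |y - Bn (1/(A:ℝ)) n (vR R)| ≤ Bn (1/(A:ℝ)) n (fun k => |vR R k - y|) := by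
    rw [abs_sub_comm]
    have := Bn_abs S.q0.le S.q1 n (fun k => vR R k - y)
    rwa [Bn_sub, Bn_const] at this
  have s3 : Bn (1/(A:ℝ)) n (fun k => |vR R k - Bn (1/(A:ℝ)) n (vR R)|)
      ≤ 2 * Bn (1/(A:ℝ)) n (fun k => |vR R k - y|) := by
    calc _ ≤ Bn (1/(A:ℝ)) n (fun k => |vR R k - y| + |y - Bn (1/(A:ℝ)) n (vR R)|) := by
          apply Bn_mono S.q0.le S.q1
          intro k hk
          exact abs_sub_le _ _ _
      _ ≤ _ := by rw [Bn_add, Bn_const]; linarith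
  have a2 := h2 n
  have a3 := h3 n
  rw [abs_of_nonneg (by positivity)] at a2 a3
  have e : ((n:ℝ)+1)^(1+kap A M - 1/2) * Real.sqrt ((n:ℝ)+1) = ((n:ℝ)+1)^(1+kap A M) := by
    rw [Real.sqrt_eq_rpow, ← Real.rpow_add n0]; congr 1; ring
  have e2 : 2 * (B * ((Z+1)/2 * Real.sqrt ((n:ℝ)+1))) = η/2 * ((n:ℝ)+1)^(1+kap A M)
      + ((Z+1)*C) * ((n:ℝ)+1)^(1/2:ℝ) := by
    rw [← e, hB, ← Real.sqrt_eq_rpow]; field_simp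
  linarith

lemma Sys.vsum_dev (S : Sys A M R) : Lo (1+kap A M) (fun n => avr A n (fun c => |∑ a, vR R (cnt c a) - vR R n / M|)) := by
  have hk0 := S.kap_pos
  have hk1 := S.kap_lt
  have hM : (0:ℝ) < M := by have := S.Mpos; positivity
  obtain ⟨C, hC, hr⟩ := S.rv_bound
  have h3 := (S.vdev.cmul A).add ((Lo.of_bound (s' := 1+(kap A M)^2) (s := 1+kap A M) (by positivity) (by nlinarith) C hC
    (x := fun n => |vR R n - (M*A) * Bn (1/(A:ℝ)) n (vR R)|) (fun n => by rw [abs_abs]; exact hr n)).cmul (1/M))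
  refine h3.mono fun n => ?_
  have p1 : 0 ≤ Bn (1/(A:ℝ)) n (fun k => |vR R k - Bn (1/(A:ℝ)) n (vR R)|) :=
    Bn_nonneg S.q0.le S.q1 _ _ fun _ _ => abs_nonneg _
  rw [abs_of_nonneg, abs_of_nonneg (by positivity)]
  · calc _ ≤ avr A n (fun c => ∑ a, (fun k => |vR R k - Bn (1/(A:ℝ)) n (vR R)|) (cnt c a)
          + 1/M * |vR R n - (M*A) * Bn (1/(A:ℝ)) n (vR R)|) := by
          apply avr_mono
          intro c
          have e : ∑ a, vR R (cnt c a) - vR R n / M = ∑ a, (vR R (cnt c a) - Bn (1/(A:ℝ)) n (vR R))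
            - 1/M * (vR R n - (M*A) * Bn (1/(A:ℝ)) n (vR R)) := by
            rw [Finset.sum_sub_distrib]; simp; field_simp; ring
          rw [e]
          refine (abs_sub _ _).trans ?_
          rw [abs_mul, abs_of_pos (by positivity : (0:ℝ) < 1/M)]
          gcongr
          exact Finset.abs_sum_le_sum_abs _ _
      _ = _ := by
          rw [avr_add, avr_const S.Apos, avr_sum_cnt S.Apos (f := fun k => |vR R k - Bn (1/(A:ℝ)) n (vR R)|)]
  · unfold avr
    exact mul_nonneg (by positivity) (Finset.sum_nonneg fun _ _ => abs_nonneg _)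
end
end GT


namespace GT
open PowerSeries

lemma tendsto_neg_pow (s : ℝ) (hs : 0 < s) : Tendsto (fun n : ℕ => ((n:ℝ)+1)^(-s)) atTop (𝓝 0) :=
  (tendsto_rpow_neg_atTop hs).comp
      (tendsto_atTop_add_const_right _ _ tendsto_natCast_atTop_atTop)

lemma Lo.ev {s : ℝ} (hs : 0 < s) {x : ℕ → ℝ} (h : Lo s x) (η : ℝ) (hη : 0 < η) :
    ∀ᶠ n : ℕ in atTop, ∀ k ≤ n, |x k| * ((n:ℝ)+1)^(-s) ≤ η := by
  obtain ⟨C, hC, h⟩ := h (η/2) (by positivity)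
  have h1 : ∀ᶠ n : ℕ in atTop, C * ((n:ℝ)+1)^(-s) < η/2 := by
    have := (tendsto_neg_pow s hs).const_mul C
    rw [mul_zero] at this
    exact this.eventually_lt_const (by positivity)
  filter_upwards [h1] with n hn k hk
  have n0 : (0:ℝ) < (n:ℝ)+1 := by positivity
  calc |x k| * ((n:ℝ)+1)^(-s) ≤ (η/2 * ((n:ℝ)+1)^s + C) * ((n:ℝ)+1)^(-s) := by
        gcongr
        refine (h k).trans ?_
        gcongr
    _ = η/2 * (((n:ℝ)+1)^s * ((n:ℝ)+1)^(-s)) + C * ((n:ℝ)+1)^(-s) := by ring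
    _ ≤ η := by
      rw [← Real.rpow_add n0, add_neg_cancel, Real.rpow_zero]; linarith

lemma Lo.of_ev {s : ℝ} {x : ℕ → ℝ} (h : ∀ η > 0, ∀ᶠ n : ℕ in atTop, |x n| ≤ η * ((n:ℝ)+1)^s) : Lo s x := by
  intro η hη
  obtain ⟨n0, hn0⟩ := eventually_atTop.1 (h η hη)
  obtain ⟨C', hC', hb⟩ := exists_bound x n0
  refine ⟨C', hC', fun n => ?_⟩
  by_cases hn : n < n0
  · have := hb n hn
    have : 0 ≤ η * ((n:ℝ)+1)^s := by positivity
    linarith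
  · have := hn0 n (by omega)
    linarith

/-- the error terms -/
noncomputable def dl (R : ℕ → PowerSeries ℝ) (m n : ℕ) : ℝ := coeff m (FR R n) - coeff m (Gs (vR R n))

section
variable {A M : ℕ} {R : ℕ → PowerSeries ℝ}

lemma Sys.dl0 (S : Sys A M R) (n : ℕ) : dl R 0 n = 0 := by
  simp [dl, S.FR_const, coeff_Gs, ← coeff_zero_eq_constantCoeff_apply, -coeff_zero_eq_constantCoeff]
  rw [coeff_zero_eq_constantCoeff_apply, S.FR_const]; simp
lemma Sys.dl1 (S : Sys A M R) (n : ℕ) : dl R 1 n = 0 := by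
  simp [dl, S.FR_one, coeff_Gs]
lemma dl2 (n : ℕ) : dl R 2 n = 0 := by
  simp [dl, vR, coeff_Gs]

lemma Sys.main_step (S : Sys A M R) (m : ℕ) (hm : 3 ≤ m)
    (ih : ∀ j < m, Lo (j * (1+kap A M) / 2) (dl R j)) : Lo (m * (1+kap A M) / 2) (dl R m) := by
  have hk0 := S.kap_pos
  have hk1 := S.kap_lt
  have hMpos := S.Mpos
  set ρ := 1 + kap A M with hρ
  set H : ℕ → PowerSeries ℝ := fun k => FR R k - C (dl R m k) * X^m with hH
  have hHc : ∀ k, constantCoeff (H k) = 1 := by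
    intro k
    simp [hH, S.FR_const, show m ≠ 0 by omega]
  set P : ℕ → PowerSeries ℝ := fun n => avp A n (fun c => ex (DR A M R n c) * ∏ a, H (cnt c a)) with hP
  have hsim := fun n => S.FR_sim (by omega : 1 ≤ m) (dl R m) H (fun k => Sim.remove _ _ _) hHc n
  -- weights
  set T : ℕ → ℝ := fun n => ((n:ℝ)+1)^(-(ρ/2)) with hT
  have hT0 : ∀ n, 0 < T n := fun n => by positivity
  have hTj : ∀ n j : ℕ, T n ^ j = ((n:ℝ)+1)^(-((j:ℝ)*ρ/2)) := by
    intro n j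
    rw [hT, ← Real.rpow_natCast, ← Real.rpow_mul (by positivity)]; congr 1; ring
  have hT2 : ∀ n, T n ^ 2 = ((n:ℝ)+1)^(-ρ) := by
    intro n; rw [hTj]; congr 1; push_cast; ring
  -- step (i)
  have s1 : ∀ η > 0, ∀ᶠ n : ℕ in atTop, ∀ k ≤ n, nrm m (T n) (H k - Gs (vR R k)) ≤ η := by
    intro η hη
    have h1 : ∀ j ∈ Finset.range m, ∀ᶠ n : ℕ in atTop, ∀ k ≤ n, |dl R j k| * T n ^ j ≤ η/m := by
      intro j hj
      rw [Finset.mem_range] at hj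
      rcases Nat.eq_zero_or_pos j with rfl | hj0
      · filter_upwards with n k _
        rw [S.dl0]; simp; positivity
      · have := (ih j hj).ev (by positivity) (η/m) (by positivity)
        filter_upwards [this] with n hn k hk
        rw [hTj]; exact hn k hk
    rw [← Finset.eventually_all] at h1
    filter_upwards [h1] with n hn k hk
    unfold nrm
    rw [Finset.sum_range_succ]
    have e0 : coeff m (H k - Gs (vR R k)) = 0 := by
      simp only [hH, map_sub, coeff_C_mul, coeff_X_pow_self]
      rw [dl]; ring
    rw [e0, abs_zero, zero_mul, add_zero]
    calc _ ≤ ∑ j ∈ Finset.range m, η/m := by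
          apply Finset.sum_le_sum
          intro j hj
          have : coeff j (H k - Gs (vR R k)) = dl R j k := by
            rw [Finset.mem_range] at hj
            simp only [hH, map_sub, coeff_C_mul, coeff_X_pow, if_neg (show ¬ j = m by omega)]
            rw [dl.eq_1 R j k]; ring
          rw [this]; exact hn j hj k hk
      _ = η := by simp; field_simp
  -- step (ii)
  obtain ⟨Cv, hCv, hv⟩ := S.vR_bound
  have s2 : ∀ n, ∀ k ≤ n, |vR R k| * T n ^ 2 ≤ Cv := by
    intro n k hk
    rw [hT2, abs_of_nonneg (S.vR_nonneg k)]
    calc _ ≤ (Cv * ((n:ℝ)+1)^ρ) * ((n:ℝ)+1)^(-ρ) := by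
          gcongr
          refine (hv k).trans ?_
          gcongr
      _ = _ := by
        rw [mul_assoc, ← Real.rpow_add (by positivity), add_neg_cancel, Real.rpow_zero, mul_one]
  have hA1 := S.A1
  set Cb : ℝ := A * Cv with hCb
  have hCb0 : 0 ≤ Cb := by positivity
  have hCvb : Cv ≤ Cb := by rw [hCb]; nlinarith
  set K : ℝ := 1 + (m * (1+Cb)^m) * Cb + 1 with hK
  have hK1 : 1 ≤ K := by
    have : 0 ≤ (m * (1+Cb)^m) * Cb := by positivity
    linarith
  set K2 : ℝ := (1 + (m * (1+Cb)^m) * Cb) * (m * (1+2*Cb)^m) with hK2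
  have hK20 : 0 ≤ K2 := by positivity
  have hG : ∀ n, ∀ w, |w| * T n ^ 2 ≤ Cb → nrm m (T n) (Gs w) ≤ K - 1 := by
    intro n w hw
    have := nrm_Gs_le m (T n) (hT0 n).le w Cb hw
    linarith
  have hvM : ∀ n, |vR R n / M| * T n ^ 2 ≤ Cb := by
    intro n
    refine le_trans ?_ hCvb
    refine le_trans ?_ (s2 n n le_rfl)
    refine mul_le_mul_of_nonneg_right ?_ (by positivity)
    rw [abs_div, Nat.abs_cast]
    apply div_le_self (abs_nonneg _)
    exact_mod_cast hMpos
  -- moments of D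
  have s3 : ∀ η > 0, ∀ᶠ n : ℕ in atTop,
      avr A n (fun c => nrm m (T n) (ex (DR A M R n c) - 1)) ≤ η := by
    intro η hη
    choose CD hCD hD using S.DR_moment
    have ht : Tendsto (fun n : ℕ => ∑ j ∈ Finset.range m,
        CD (j+1) * (((n:ℝ)+1)^(-((kap A M - (kap A M)^2)/2)))^(j+1)) atTop (𝓝 0) := by
      rw [show (0:ℝ) = ∑ j ∈ Finset.range m, CD (j+1) * 0^(j+1) by simp]
      apply tendsto_finsetSum
      intro j _
      apply Tendsto.const_mul
      apply Tendsto.pow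
      exact tendsto_neg_pow _ (by nlinarith)
    filter_upwards [ht.eventually_lt_const hη] with n hn
    refine le_trans ?_ hn.le
    calc _ ≤ avr A n (fun c => ∑ j ∈ Finset.range m, T n^(j+1) * |DR A M R n c|^(j+1)) := by
          apply avr_mono
          intro c
          refine (nrm_ex_sub_one m _ (hT0 n).le _).trans (le_of_eq ?_)
          exact Finset.sum_congr rfl fun j _ => mul_comm _ _
      _ = ∑ j ∈ Finset.range m, T n^(j+1) * avr A n (fun c => |DR A M R n c|^(j+1)) := by
          rw [avr_sum]; simp only [avr_mul]
      _ ≤ _ := by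
          apply Finset.sum_le_sum
          intro j _
          have t0 := hT0 n
          calc _ ≤ T n^(j+1) * (CD (j+1) * (((n:ℝ)+1)^((1+(kap A M)^2)/2))^(j+1)) := by
                gcongr; exact hD _ _
            _ = CD (j+1) * (((n:ℝ)+1)^((1+(kap A M)^2)/2) * T n)^(j+1) := by rw [mul_pow]; ring
            _ = _ := by
              rw [hT, ← Real.rpow_add (by positivity)]; congr 3; rw [hρ]; ring
  -- main estimate
  have s4 : ∀ η > 0, ∀ᶠ n : ℕ in atTop, nrm m (T n) (P n - Gs (vR R n / M)) ≤ η := by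
    intro η hη
    have e1 := s1 1 one_pos
    have e2 := s1 (η/(3*(A*K^A+1))) (by positivity)
    have e3 := s3 (η/(3*(K^A+1))) (by positivity)
    have e4 := S.vsum_dev.ev (by positivity) (η/(3*(K2+1))) (by positivity)
    filter_upwards [e1, e2, e3, e4] with n h1 h2 h3 h4
    have t0 := (hT0 n).le
    set η2 := η/(3*(A*K^A+1)) with hη2
    have hHK : ∀ k ≤ n, nrm m (T n) (H k) ≤ K := by
      intro k hk
      have e : H k = (H k - Gs (vR R k)) + Gs (vR R k) := by ring
      rw [e]
      refine (nrm_add_le t0 _ _).trans ?_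
      have := hG n _ ((s2 n k hk).trans hCvb)
      have := h1 k hk
      linarith
    have hpt : ∀ c : Fin n → Fin A, nrm m (T n) (ex (DR A M R n c) * ∏ a, H (cnt c a) - Gs (vR R n / M))
        ≤ (K^A * nrm m (T n) (ex (DR A M R n c) - 1) + A*K^A*η2)
          + (K2 * T n^2) * |∑ a, vR R (cnt c a) - vR R n / M| := by
      intro c
      have e : ex (DR A M R n c) * ∏ a, H (cnt c a) - Gs (vR R n / M)
        = ((∏ a, H (cnt c a)) * (ex (DR A M R n c) - 1) + (∏ a, H (cnt c a) - ∏ a, Gs (vR R (cnt c a))))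
          + (Gs (∑ a, vR R (cnt c a)) - Gs (vR R n / M)) := by
        rw [Gs_sum]; ring
      rw [e]
      refine (nrm_add_le t0 _ _).trans (add_le_add ((nrm_add_le t0 _ _).trans (add_le_add ?_ ?_)) ?_)
      · refine (nrm_mul_le t0 _ _).trans ?_
        have := nrm_prod_le (m := m) t0 Finset.univ (fun a => H (cnt c a)) K (fun a _ => hHK _ (cnt_le c a))
        simp only [Finset.card_univ, Fintype.card_fin] at this
        have := nrm_nonneg (m := m) t0 (ex (DR A M R n c) - 1)
        gcongr
      · have := nrm_prod_sub_le (m := m) t0 Finset.univ (fun a => H (cnt c a)) (fun a => Gs (vR R (cnt c a))) K η2 hK1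
          (fun a _ => hHK _ (cnt_le c a))
          (fun a _ => (hG n _ ((s2 n _ (cnt_le c a)).trans hCvb)).trans (by linarith))
          (fun a _ => h2 _ (cnt_le c a))
        simpa using this
      · obtain ⟨K', _, rfl, hGs⟩ := nrm_Gs_sub_le m (T n) t0 Cb hCb0
        refine (hGs _ _ ?_ (hvM n)).trans (le_of_eq (by rw [hK2]; ring))
        calc _ ≤ (∑ a, |vR R (cnt c a)|) * T n^2 := by
              gcongr; exact Finset.abs_sum_le_sum_abs _ _
          _ = ∑ a, |vR R (cnt c a)| * T n^2 := Finset.sum_mul _ _ _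
          _ ≤ ∑ a : Fin A, Cv := Finset.sum_le_sum fun a _ => s2 n _ (cnt_le c a)
          _ = Cb := by simp [hCb]
    have e5 : P n - Gs (vR R n / M) = avp A n (fun c => ex (DR A M R n c) * ∏ a, H (cnt c a) - Gs (vR R n / M)) := by
      rw [← avp_sub, avp_const S.Apos]
    rw [e5]
    refine (nrm_avp_le t0 _).trans ((avr_mono _ _ hpt).trans ?_)
    rw [avr_add, avr_add, avr_const S.Apos, avr_mul, avr_mul (K2 * T n^2)]
    have h4' := h4 n le_rfl
    rw [← hT2, abs_of_nonneg (by
      unfold avr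
      exact mul_nonneg (by positivity) (Finset.sum_nonneg fun _ _ => abs_nonneg _))] at h4'
    have b1 : K^A * avr A n (fun c => nrm m (T n) (ex (DR A M R n c) - 1)) ≤ η/3 := by
      calc _ ≤ K^A * (η/(3*(K^A+1))) := by gcongr
        _ = (η/3) * (K^A/(K^A+1)) := by field_simp
        _ ≤ (η/3) * 1 := by
          gcongr
          rw [div_le_one (by positivity)]; linarith
        _ = _ := mul_one _
    have b2 : A*K^A*η2 ≤ η/3 := by
      rw [hη2]
      calc _ = (η/3) * (A*K^A/(A*K^A+1)) := by field_simp
        _ ≤ (η/3) * 1 := by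
          gcongr
          rw [div_le_one (by positivity)]; linarith
        _ = _ := mul_one _
    have b3 : (K2 * T n^2) * avr A n (fun c => |∑ a, vR R (cnt c a) - vR R n / M|) ≤ η/3 := by
      calc _ = K2 * (avr A n (fun c => |∑ a, vR R (cnt c a) - vR R n / M|) * T n^2) := by ring
        _ ≤ K2 * (η/(3*(K2+1))) := by gcongr
        _ = (η/3) * (K2/(K2+1)) := by field_simp
        _ ≤ (η/3) * 1 := by
          gcongr
          rw [div_le_one (by positivity)]; linarith
        _ = _ := mul_one _
    linarith
  -- the inhomogeneous term
  set y : ℕ → ℝ := fun n => coeff m (P n ^ M - Gs (vR R n)) with hy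
  have s5 : Lo (m*ρ/2) y := by
    apply Lo.of_ev
    intro η hη
    have e1 := s4 1 one_pos
    have e2 := s4 (η/(M*K^M+1)) (by positivity)
    filter_upwards [e1, e2] with n h1 h2
    have t0 := (hT0 n).le
    have hGM : Gs (vR R n) = Gs (vR R n / M) ^ M := by
      rw [← Gs_nsmul]; congr 1; field_simp
    have hb : nrm m (T n) (P n ^ M - Gs (vR R n)) ≤ η := by
      rw [hGM]
      have hGK := hG n _ (hvM n)
      have := nrm_prod_sub_le (m := m) t0 (Finset.range M) (fun _ => P n) (fun _ => Gs (vR R n / M)) K _ hK1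
        (fun _ _ => by
          have e : P n = (P n - Gs (vR R n / M)) + Gs (vR R n / M) := by ring
          rw [e]
          refine (nrm_add_le t0 _ _).trans ?_
          linarith) (fun _ _ => by linarith) (fun _ _ => h2)
      simp only [Finset.prod_const, Finset.card_range] at this
      refine this.trans ?_
      calc _ = η * (M*K^M/(M*K^M+1)) := by field_simp
        _ ≤ η * 1 := by
          gcongr
          rw [div_le_one (by positivity)]; linarith
        _ = _ := mul_one _
    have := (coeff_le_nrm t0 (P n ^ M - Gs (vR R n)) m le_rfl).trans hb
    rw [hTj, Real.rpow_neg (by positivity), ← div_eq_mul_inv, div_le_iff₀ (by positivity)] at this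
    exact this
  have hrec : ∀ n, dl R m n = (M*A) * Bn (1/(A:ℝ)) n (dl R m) + y n := by
    intro n
    have := (hsim n).coeff_eq
    rw [hy, dl, this]; simp only [map_sub, hP]; ring
  have hm3 : (3:ℝ) ≤ m := by exact_mod_cast hm
  apply contract_o S.q0 S.q1 (m*ρ/2) (by positivity) (M*A) (by positivity)
  · rw [S.MA_eq]
    apply S.con_lt
    nlinarith
  · intro η hη
    obtain ⟨C, hC, h⟩ := s5 η hη
    refine ⟨C, hC, fun n => ?_⟩
    conv_lhs => rw [hrec n]
    refine (abs_add_le _ _).trans (add_le_add ?_ (h n))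
    rw [abs_mul, abs_of_nonneg (by positivity : (0:ℝ) ≤ M*A)]
    gcongr
    exact Bn_abs S.q0.le S.q1 _ _

theorem Sys.main (S : Sys A M R) (m : ℕ) : Lo (m * (1+kap A M) / 2) (dl R m) := by
  induction m using Nat.strong_induction_on with
  | _ m ih =>
    by_cases hm : 3 ≤ m
    · exact S.main_step m hm ih
    · have h0 : ∀ n, dl R m n = 0 := by
        interval_cases m
        · exact S.dl0
        · exact S.dl1
        · exact dl2
      intro η hη
      exact ⟨0, le_rfl, fun n => by rw [h0, abs_zero]; positivity⟩
end
end GT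


namespace GT
open PowerSeries

/-- truncated labelings of depth `d` -/
def Lab (M A : ℕ) : ℕ → Type
  | 0 => Unit
  | d+1 => Fin M → Fin A × Lab M A d

noncomputable instance Lab.fintype (M A : ℕ) : (d : ℕ) → Fintype (Lab M A d)
  | 0 => inferInstanceAs (Fintype Unit)
  | d+1 => by
    classical
    haveI := Lab.fintype M A d
    exact inferInstanceAs (Fintype (Fin M → Fin A × Lab M A d))

lemma Lab.card_zero (M A : ℕ) : Fintype.card (Lab M A 0) = 1 := Fintype.card_unit

lemma Lab.card_succ (M A d : ℕ) : Fintype.card (Lab M A (d+1)) = (A * Fintype.card (Lab M A d))^M := by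
  classical
  have : Fintype.card (Lab M A (d+1)) = Fintype.card (Fin M → Fin A × Lab M A d) :=
    Fintype.card_congr (Equiv.refl _)
  rw [this]; simp

/-- truncated size -/
noncomputable def SS (M A : ℕ) : (d : ℕ) → (ι : Type) → [Fintype ι] → (ι → Lab M A d) → ℕ
  | 0 => fun _ _ _ => 0
  | d+1 => fun ι _ x => (if 2 ≤ Fintype.card ι then 1 else 0) +
      ∑ i : Fin M, ∑ a : Fin A, SS M A d {l : ι // (x l i).1 = a} (fun l => (x l.1 i).2)

/-- truncated generating series -/
noncomputable def RR (M A : ℕ) : ℕ → ℕ → PowerSeries ℝ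
  | 0, _ => 1
  | d+1, n => ex (tt n) * (avp A n (fun c => ∏ a, RR M A d (cnt c a)))^M

lemma sum_col {A : ℕ} (ι : Type) [Fintype ι] [DecidableEq ι] (f : ℕ → PowerSeries ℝ) :
    ∑ c : ι → Fin A, ∏ a, f (Fintype.card {l // c l = a})
      = ∑ c : Fin (Fintype.card ι) → Fin A, ∏ a, f (cnt c a) := by
  let e := Fintype.equivFin ι
  rw [← Equiv.sum_comp (Equiv.arrowCongr e.symm (Equiv.refl (Fin A)))]
  refine Finset.sum_congr rfl fun c _ => Finset.prod_congr rfl fun a _ => ?_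
  congr 1
  unfold cnt
  exact Fintype.card_congr (e.subtypeEquiv (fun l => by simp))

lemma sum_fiber {A : ℕ} (ι Λ : Type) [Fintype ι] [DecidableEq ι] [Fintype Λ] (c : ι → Fin A)
    (g : (a : Fin A) → ({l // c l = a} → Λ) → PowerSeries ℝ) :
    ∑ z : ι → Λ, ∏ a, g a (fun l => z l.1) = ∏ a, ∑ w, g a w := by
  classical
  let e1 : (ι → Λ) ≃ ((Σ a, {l // c l = a}) → Λ) :=
    Equiv.arrowCongr (Equiv.sigmaFiberEquiv c).symm (Equiv.refl Λ)
  let e2 : ((Σ a, {l // c l = a}) → Λ) ≃ ((a : Fin A) → {l // c l = a} → Λ) :=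
    Equiv.piCurry (fun _ _ => Λ)
  rw [Finset.prod_univ_sum, Fintype.piFinset_univ, ← Equiv.sum_comp (e1.trans e2)]
  rfl

theorem sum_ex (M A d : ℕ) (hA : 0 < A) : ∀ (ι : Type) [Fintype ι] [DecidableEq ι],
    ∑ x : ι → Lab M A d, ex (SS M A d ι x)
      = C ((Fintype.card (Lab M A d) : ℝ)^(Fintype.card ι)) * RR M A d (Fintype.card ι) := by
  induction d with
  | zero =>
    intro ι _ _
    simp [SS, RR, ex_zero, Lab.card_zero]
  | succ d ih =>
    intro ι _ _
    set n := Fintype.card ι with hn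
    let h : (ι → Fin A × Lab M A d) → PowerSeries ℝ := fun y =>
      ∏ a, ex (SS M A d {l : ι // (y l).1 = a} (fun l => (y l.1).2))
    have e1 : ∀ x : ι → Lab M A (d+1), ex (SS M A (d+1) ι x) = ex (tt n) * ∏ i : Fin M, h (fun l => x l i) := by
      intro x
      simp only [SS, h, ← ex_sum, ← ex_add]
      congr 1
      push_cast [tt]
      rw [hn]
    have e2 : ∑ y, h y = C ((Fintype.card (Lab M A d) : ℝ)^n) * (C ((A:ℝ)^n) * avp A n (fun c => ∏ a, RR M A d (cnt c a))) := by
      rw [← Equiv.sum_comp (Equiv.arrowProdEquivProdArrow ι (fun _ => Fin A) (fun _ => Lab M A d)).symm, Fintype.sum_prod_type]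
      have : ∀ c : ι → Fin A, ∑ z : ι → Lab M A d,
          h ((Equiv.arrowProdEquivProdArrow ι (fun _ => Fin A) (fun _ => Lab M A d)).symm (c, z))
          = C ((Fintype.card (Lab M A d) : ℝ)^n) * ∏ a, RR M A d (Fintype.card {l // c l = a}) := by
        intro c
        have := sum_fiber ι (Lab M A d) c (fun a w => ex (SS M A d {l // c l = a} w))
        refine Eq.trans ?_ (this.trans ?_)
        · rfl
        · simp only [ih]
          rw [Finset.prod_mul_distrib, ← map_prod, Finset.prod_pow_eq_pow_sum]
          congr 3
          rw [← Fintype.card_sigma, hn]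
          exact Fintype.card_congr (Equiv.sigmaFiberEquiv c)
      simp only [this]
      rw [← Finset.mul_sum, sum_col, ← hn, avp, ← mul_assoc (C ((A:ℝ)^n)), ← map_mul,
        mul_inv_cancel₀ (by positivity), map_one, one_mul]
    have e3 : ∑ x : ι → Lab M A (d+1), ∏ i : Fin M, h (fun l => x l i) = (∑ y, h y)^M := by
      rw [Fintype.sum_pow]
      let e : (ι → Lab M A (d+1)) ≃ (Fin M → ι → Fin A × Lab M A d) :=
        Equiv.piComm (fun (_ : ι) (_ : Fin M) => Fin A × Lab M A d)
      rw [← Equiv.sum_comp e]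
      rfl
    simp only [e1]
    rw [← Finset.mul_sum, e3, e2, RR, Lab.card_succ]
    push_cast
    simp only [map_pow, map_mul]
    ring

end GT


namespace GT
open PowerSeries

section
variable {M A : ℕ}

lemma RR_le_one (hA : 0 < A) (d : ℕ) : ∀ n ≤ 1, RR M A d n = 1 := by
  induction d with
  | zero => intro n _; rfl
  | succ d ih =>
    intro n hn
    have : (fun c : Fin n → Fin A => ∏ a, RR M A d (cnt c a)) = fun _ => 1 := by
      funext c
      exact Finset.prod_eq_one fun a _ => ih _ ((cnt_le c a).trans hn)
    rw [RR, this, avp_const hA, tt, if_neg (by omega), ex_zero]; simp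

lemma RR_const (hA : 0 < A) (d n : ℕ) : constantCoeff (RR M A d n) = 1 := by
  induction d generalizing n with
  | zero => simp [RR]
  | succ d ih =>
    rw [RR, map_mul, const_ex, map_pow, const_avp hA _ (fun c => ?_)]
    · simp
    · rw [map_prod]; simp [ih]

lemma RR_coeff_step (hA : 0 < A) (m : ℕ) (hm : 1 ≤ m) (d n : ℕ) :
    coeff m (RR M A (d+1) n) = coeff m (ex (tt n) * (avp A n (fun c => ∏ a,
        (RR M A d (cnt c a) - C (coeff m (RR M A d (cnt c a))) * X^m)))^M)
      + M * A * Bn (1/(A:ℝ)) n (fun k => coeff m (RR M A d k)) := by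
  set x : ℕ → ℝ := fun k => coeff m (RR M A d k) with hx
  set H : ℕ → PowerSeries ℝ := fun k => RR M A d k - C (x k) * X^m with hH
  have hHc : ∀ k, constantCoeff (H k) = 1 := by
    intro k
    simp [hH, RR_const hA, show m ≠ 0 by omega]
  have h1 : ∀ c : Fin n → Fin A, Sim m (∏ a, RR M A d (cnt c a)) (∏ a, H (cnt c a)) (∑ a, x (cnt c a)) :=
    fun c => Sim.prod hm _ _ _ _ (fun a _ => Sim.remove _ _ _) (fun a _ => hHc _)
  have h2 := Sim.avp _ _ _ h1
  have hc : constantCoeff (avp A n (fun c => ∏ a, H (cnt c a))) = 1 :=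
    const_avp hA _ (fun c => by rw [map_prod]; simp [hHc])
  have h3 := Sim.pow hm h2 hc M
  have h4 := Sim.mul hm (Sim.refl m (ex (tt n))) h3 (const_ex _) (by rw [map_pow, hc, one_pow])
  rw [avr_sum_cnt hA, zero_add] at h4
  have := h4.coeff_eq
  rw [RR, this]; ring

theorem RR_bdd (hM : 0 < M) (hMA : M < A) (m : ℕ) : ∀ n, ∃ K : ℝ, ∀ d, |coeff m (RR M A d n)| ≤ K := by
  have hA : 0 < A := by omega
  induction m using Nat.strong_induction_on with
  | _ m ih =>
  rcases Nat.eq_zero_or_pos m with rfl | hm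
  · intro n; exact ⟨1, fun d => by rw [coeff_zero_eq_constantCoeff_apply, RR_const hA]; simp⟩
  intro N
  choose b hb using ih
  let K : ℝ := ∑ k ∈ Finset.range (N+1), ∑ j ∈ (Finset.range m).attach, b j.1 (Finset.mem_range.1 j.2) k
  have b0 : ∀ j hj k, 0 ≤ b j hj k := fun j hj k => (abs_nonneg _).trans (hb j hj k 0)
  have hnH : ∀ d, ∀ k ≤ N, nrm m 1 (RR M A d k - C (coeff m (RR M A d k)) * X^m) ≤ K := by
    intro d k hk
    unfold nrm
    rw [Finset.sum_range_succ]
    simp only [map_sub, coeff_C_mul, coeff_X_pow_self, mul_one, sub_self, abs_zero, one_pow, add_zero]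
    calc _ = ∑ j ∈ Finset.range m, |coeff j (RR M A d k)| := by
          refine Finset.sum_congr rfl fun j hj => ?_
          rw [Finset.mem_range] at hj
          rw [coeff_X_pow, if_neg (by omega)]; simp
      _ = ∑ j ∈ (Finset.range m).attach, |coeff j.1 (RR M A d k)| := (Finset.sum_attach _ _).symm
      _ ≤ ∑ j ∈ (Finset.range m).attach, b j.1 (Finset.mem_range.1 j.2) k :=
          Finset.sum_le_sum fun j _ => hb _ _ _ _
      _ ≤ K := Finset.single_le_sum
          (f := fun k => ∑ j ∈ (Finset.range m).attach, b j.1 (Finset.mem_range.1 j.2) k)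
          (fun k _ => Finset.sum_nonneg fun j _ => b0 _ _ _) (Finset.mem_range.2 (by omega))
  have hK0 : 0 ≤ K := Finset.sum_nonneg fun k _ => Finset.sum_nonneg fun j _ => b0 _ _ _
  have ht : (0:ℝ) ≤ 1 := zero_le_one
  have hcf : ∀ d, ∀ n ≤ N, |coeff m (ex (tt n) * (avp A n (fun c => ∏ a,
        (RR M A d (cnt c a) - C (coeff m (RR M A d (cnt c a))) * X^m)))^M)|
        ≤ nrm m 1 (ex (tt n)) * (K^A)^M := by
    intro d n hn
    have h1 := coeff_le_nrm (m := m) ht (ex (tt n) * (avp A n (fun c => ∏ a,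
        (RR M A d (cnt c a) - C (coeff m (RR M A d (cnt c a))) * X^m)))^M) m le_rfl
    rw [one_pow, mul_one] at h1
    refine h1.trans ((nrm_mul_le ht _ _).trans ?_)
    refine mul_le_mul_of_nonneg_left ?_ (nrm_nonneg ht _)
    have h2 : nrm m 1 (avp A n (fun c => ∏ a,
        (RR M A d (cnt c a) - C (coeff m (RR M A d (cnt c a))) * X^m))) ≤ K^A := by
      refine (nrm_avp_le ht _).trans ?_
      rw [← avr_const (n := n) hA (K^A)]
      apply avr_mono
      intro c
      have := nrm_prod_le (m := m) ht Finset.univ (fun a => RR M A d (cnt c a) - C (coeff m (RR M A d (cnt c a))) * X^m) K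
        (fun a _ => hnH d _ ((cnt_le c a).trans hn))
      simpa using this
    have := nrm_prod_le (m := m) ht (Finset.range M) (fun _ => avp A n (fun c => ∏ a,
        (RR M A d (cnt c a) - C (coeff m (RR M A d (cnt c a))) * X^m))) _ (fun _ _ => h2)
    simpa using this
  let C0 : ℝ := nrm m 1 (ex 1) * (K^A)^M
  have hC0 : 0 ≤ C0 := mul_nonneg (nrm_nonneg ht _) (by positivity)
  have hM' : (0:ℝ) < M := by exact_mod_cast hM
  have hMA' : (M:ℝ) < A := by exact_mod_cast hMA
  have hA' : (0:ℝ) < A := by linarith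
  have hq : 0 < 1 - (M:ℝ)/A := by rw [sub_pos, div_lt_one hA']; exact hMA'
  let D : ℝ := C0/(1 - M/A)
  have hD : 0 ≤ D := by positivity
  have hDC : D * (1 - M/A) = C0 := div_mul_cancel₀ _ hq.ne'
  have main : ∀ d, ∀ n ≤ N, |coeff m (RR M A d n)| ≤ D * (n*(n-1)) := by
    intro d
    induction d with
    | zero =>
      intro n _
      rw [RR, coeff_one, if_neg (by omega), abs_zero]
      rcases n with _ | n
      · simp
      · push_cast; rw [add_sub_cancel_right]; positivity
    | succ d ihd =>
      intro n hn
      by_cases h2 : 2 ≤ n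
      · rw [RR_coeff_step hA m hm]
        have h3 := hcf d n hn
        rw [tt, if_pos h2] at h3
        have h4 : |Bn (1/(A:ℝ)) n (fun k => coeff m (RR M A d k))| ≤ D * (n*(n-1)*(1/(A:ℝ))^2) := by
          have q0 : (0:ℝ) ≤ 1/A := by positivity
          have q1 : (1:ℝ)/A ≤ 1 := by
            rw [div_le_one hA']; exact_mod_cast hA
          refine (Bn_abs q0 q1 _ _).trans ?_
          rw [← Bn_fact2, ← Bn_mul]
          exact Bn_mono q0 q1 _ _ _ (fun k hk => ihd k (hk.trans hn))
        have hn2 : (2:ℝ) ≤ n := by exact_mod_cast h2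
        rw [tt, if_pos h2]
        refine (abs_add_le _ _).trans ((add_le_add h3 ?_).trans (?_ : C0 + M*A*(D * (n*(n-1)*(1/(A:ℝ))^2)) ≤ _))
        · rw [abs_mul, abs_of_nonneg (by positivity)]
          gcongr
        · have : (1:ℝ) ≤ n*(n-1) := by nlinarith
          have e : D * (n*(n-1)) = C0 * (n*(n-1)) + M*A*(D * (n*(n-1)*(1/(A:ℝ))^2)) := by
            rw [← hDC]; field_simp; ring
          nlinarith
      · rw [RR_le_one hA _ _ (by omega), coeff_one, if_neg (by omega), abs_zero]
        rcases n with _ | n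
        · simp
        · push_cast; rw [add_sub_cancel_right]; positivity
  exact ⟨_, fun d => main d N le_rfl⟩
end
end GT


namespace GT

section
variable {M A : ℕ}

/-- truncation of a labeling -/
def trunc : (d : ℕ) → (List (Fin M) → Fin A) → Lab M A d
  | 0, _ => ()
  | d+1, L => fun i => (L [i], trunc d (fun w => L (i :: w)))

lemma occurs_nil (L : List (Fin M) → Fin A) : Occurs L [] := fun t => t.elim0

lemma occurs_cons (L : List (Fin M) → Fin A) (i : Fin M) (a : Fin A) (w : List (Fin M × Fin A)) :
    Occurs L ((i,a) :: w) ↔ L [i] = a ∧ Occurs (fun v => L (i :: v)) w := by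
  constructor
  · intro h
    refine ⟨by simpa using h ⟨0, by simp⟩, fun t => ?_⟩
    have := h ⟨t.1+1, by simp⟩
    simpa using this
  · rintro ⟨h1, h2⟩ ⟨t, ht⟩
    cases t with
    | zero => simpa using h1
    | succ t =>
      have := h2 ⟨t, by simpa using ht⟩
      simpa using this

/-- words of length less than `d` occurring at least twice -/
def TT (d : ℕ) (ι : Type) (Ls : ι → List (Fin M) → Fin A) : Set (List (Fin M × Fin A)) :=
  {w | 2 ≤ Nat.card {l // Occurs (Ls l) w} ∧ w.length < d}

lemma TT_finite (d : ℕ) (ι : Type) (Ls : ι → List (Fin M) → Fin A) : (TT d ι Ls).Finite :=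
  (List.finite_length_lt _ d).subset fun _ hw => hw.2

/-- restriction of labelings to a subtree -/
def sub (ι : Type) (Ls : ι → List (Fin M) → Fin A) (p : Fin M × Fin A) :
    {l : ι // Ls l [p.1] = p.2} → List (Fin M) → Fin A := fun l v => Ls l.1 (p.1 :: v)

lemma card_occ (ι : Type) (Ls : ι → List (Fin M) → Fin A) (p : Fin M × Fin A) (w : List (Fin M × Fin A)) :
    Nat.card {l // Occurs (Ls l) (p :: w)} = Nat.card {l // Occurs (sub ι Ls p l) w} := by
  apply Nat.card_congr
  refine Equiv.trans ?_ (Equiv.subtypeSubtypeEquivSubtypeInter (fun l => Ls l [p.1] = p.2)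
    (fun l => Occurs (fun v => Ls l (p.1 :: v)) w)).symm
  exact Equiv.subtypeEquivRight fun l => occurs_cons _ _ _ _

lemma TT_nil (d : ℕ) (ι : Type) (Ls : ι → List (Fin M) → Fin A) :
    [] ∈ TT (d+1) ι Ls ↔ 2 ≤ Nat.card ι := by
  have : Nat.card {l // Occurs (Ls l) []} = Nat.card ι :=
    Nat.card_congr (Equiv.subtypeUnivEquiv fun l => occurs_nil _)
  simp [TT, this]

lemma TT_cons (d : ℕ) (ι : Type) (Ls : ι → List (Fin M) → Fin A) (p : Fin M × Fin A) (w : List (Fin M × Fin A)) :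
    p :: w ∈ TT (d+1) ι Ls ↔ w ∈ TT d _ (sub ι Ls p) := by
  simp only [TT, Set.mem_setOf_eq, card_occ, List.length_cons, Nat.add_lt_add_iff_right]

/-- decomposition at the root -/
def TTequiv (d : ℕ) (ι : Type) (Ls : ι → List (Fin M) → Fin A) :
    TT (d+1) ι Ls ≃ {_u : Unit // 2 ≤ Nat.card ι} ⊕ (Σ p : Fin M × Fin A, TT d _ (sub ι Ls p)) where
  toFun := fun x => match x with
    | ⟨[], h⟩ => Sum.inl ⟨(), (TT_nil d ι Ls).1 h⟩
    | ⟨p :: w, h⟩ => Sum.inr ⟨p, w, (TT_cons d ι Ls p w).1 h⟩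
  invFun := fun x => match x with
    | Sum.inl u => ⟨[], (TT_nil d ι Ls).2 u.2⟩
    | Sum.inr ⟨p, w⟩ => ⟨p :: w.1, (TT_cons d ι Ls p w.1).2 w.2⟩
  left_inv := by
    rintro ⟨_ | ⟨p, w⟩, h⟩ <;> rfl
  right_inv := by
    rintro (⟨⟨⟩, h⟩ | ⟨p, w, h⟩) <;> rfl

theorem SS_trunc (d : ℕ) : ∀ (ι : Type) [Fintype ι] (Ls : ι → List (Fin M) → Fin A),
    SS M A d ι (fun l => trunc d (Ls l)) = (TT d ι Ls).ncard := by
  induction d with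
  | zero =>
    intro ι _ Ls
    simp [SS, TT]
  | succ d ih =>
    intro ι _ Ls
    rw [← Nat.card_coe_set_eq, Nat.card_congr (TTequiv d ι Ls)]
    have : ∀ p, Finite (TT d _ (sub ι Ls p)) := fun p => TT_finite _ _ _
    rw [Nat.card_sum, Nat.card_sigma, Fintype.sum_prod_type, SS]
    refine congrArg₂ (· + ·) ?_ ?_
    · rw [Nat.card_eq_fintype_card (α := ι)]
      split_ifs with h
      · simp [h]
      · simp [h]
    · refine Finset.sum_congr rfl fun i _ => Finset.sum_congr rfl fun a _ => ?_
      rw [Nat.card_coe_set_eq]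
      exact ih _ (sub ι Ls (i, a))

lemma trunc_update (d : ℕ) (L : List (Fin M) → Fin A) (a : Fin A) :
    trunc d (Function.update L [] a) = trunc d L := by
  cases d with
  | zero => rfl
  | succ d =>
    funext i
    simp [trunc]

lemma trunc_surj (hA : 0 < A) (d : ℕ) : Function.Surjective (trunc d : (List (Fin M) → Fin A) → Lab M A d) := by
  induction d with
  | zero => intro x; exact ⟨fun _ => ⟨0, hA⟩, rfl⟩
  | succ d ih =>
    intro x
    choose g hg using ih
    refine ⟨fun w => match w with
      | [] => ⟨0, hA⟩
      | i :: v => Function.update (g (x i).2) [] (x i).1 v, ?_⟩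
    funext i
    refine Prod.ext ?_ ?_
    · simp [trunc]
    · exact (trunc_update d _ _).trans (hg _)

lemma trunc_eq (d : ℕ) : ∃ s : Finset (List (Fin M)), ∀ L L0 : List (Fin M) → Fin A,
    trunc d L = trunc d L0 ↔ ∀ w ∈ s, L w = L0 w := by
  induction d with
  | zero => exact ⟨∅, fun L L0 => ⟨fun _ w hw => by simp at hw, fun _ => rfl⟩⟩
  | succ d ih =>
    obtain ⟨s, hs⟩ := ih
    refine ⟨Finset.univ.biUnion fun i => insert [i] (s.image (fun w => i :: w)), fun L L0 => ?_⟩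
    have : trunc (d+1) L = trunc (d+1) L0 ↔
        ∀ i, L [i] = L0 [i] ∧ trunc d (fun w => L (i :: w)) = trunc d (fun w => L0 (i :: w)) := by
      constructor
      · intro h i
        have := congrFun h i
        exact ⟨congrArg Prod.fst this, congrArg Prod.snd this⟩
      · intro h
        funext i
        exact Prod.ext (h i).1 (h i).2
    rw [this]
    simp only [hs, Finset.mem_biUnion, Finset.mem_univ, true_and, Finset.mem_insert, Finset.mem_image]
    constructor
    · rintro h w ⟨i, rfl | ⟨v, hv, rfl⟩⟩
      · exact (h i).1
      · exact (h i).2 v hv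
    · intro h i
      exact ⟨h _ ⟨i, Or.inl rfl⟩, fun v hv => h _ ⟨i, Or.inr ⟨v, hv, rfl⟩⟩⟩
end
end GT


namespace GT
open PowerSeries

section
variable {M A : ℕ}

lemma meas_fiber (hA : 0 < A) (d : ℕ) (x : Lab M A d) :
    MeasurableSet (trunc d ⁻¹' {x} : Set (List (Fin M) → Fin A)) := by
  obtain ⟨L0, rfl⟩ := trunc_surj hA d x
  obtain ⟨s, hs⟩ := trunc_eq (M := M) (A := A) d
  have : (trunc d ⁻¹' {trunc d L0} : Set (List (Fin M) → Fin A)) = ⋂ w ∈ s, {L | L w = L0 w} := by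
    ext L; simp [hs]
  rw [this]
  exact Finset.measurableSet_biInter _ fun w _ =>
    measurableSet_eq_fun (measurable_pi_apply w) measurable_const

lemma muL_fiber (hA : 0 < A) (p : Fin A → ℝ) (hp : ∀ j, p j = 1 / (A : ℝ))
    (μL : Measure (List (Fin M) → Fin A)) [IsProbabilityMeasure μL]
    (hμL : IsLabelingMeasure p μL) (d : ℕ) (x : Lab M A d) :
    μL (trunc d ⁻¹' {x}) = ((Fintype.card (Lab M A d) : ℕ) : ENNReal)⁻¹ := by
  obtain ⟨s, hs⟩ := trunc_eq (M := M) (A := A) d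
  have h1 : ∀ x : Lab M A d, μL (trunc d ⁻¹' {x}) = ENNReal.ofReal (1/A) ^ s.card := by
    intro x
    obtain ⟨L0, rfl⟩ := trunc_surj hA d x
    have : (trunc d ⁻¹' {trunc d L0} : Set (List (Fin M) → Fin A)) = {L | ∀ w ∈ s, L w = L0 w} := by
      ext L; simp [hs]
    rw [this, hμL s L0]
    simp [hp]
  have h2 := sum_measure_preimage_singleton (μ := μL) (Finset.univ : Finset (Lab M A d)) (f := trunc d)
    (fun y _ => meas_fiber hA d y)
  simp only [h1, Finset.sum_const, Finset.card_univ, Finset.coe_univ, Set.preimage_univ, measure_univ,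
    nsmul_eq_mul] at h2
  rw [h1]
  exact ENNReal.eq_inv_of_mul_eq_one_left (by rw [mul_comm]; exact h2)

lemma mu_fiber (hA : 0 < A) (p : Fin A → ℝ) (hp : ∀ j, p j = 1 / (A : ℝ))
    (μL : Measure (List (Fin M) → Fin A)) [IsProbabilityMeasure μL]
    (hμL : IsLabelingMeasure p μL) (d n : ℕ) (x : Fin n → Lab M A d) :
    MeasurableSet ((fun (Ls : Fin n → List (Fin M) → Fin A) l => trunc d (Ls l)) ⁻¹' {x}) ∧
    (Measure.pi fun _ : Fin n => μL) ((fun (Ls : Fin n → List (Fin M) → Fin A) l => trunc d (Ls l)) ⁻¹' {x})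
      = (((Fintype.card (Lab M A d) : ℕ) : ENNReal)⁻¹)^n := by
  have e : ((fun (Ls : Fin n → List (Fin M) → Fin A) l => trunc d (Ls l)) ⁻¹' {x})
      = Set.univ.pi (fun l => trunc d ⁻¹' {x l}) := by
    ext Ls; simp [funext_iff]
  rw [e]
  constructor
  · exact MeasurableSet.univ_pi fun l => meas_fiber hA d _
  · rw [Measure.pi_pi]; simp [muL_fiber hA p hp μL hμL]

/-- integrals of functions of truncated labelings -/
lemma int_trunc (hA : 0 < A) (p : Fin A → ℝ) (hp : ∀ j, p j = 1 / (A : ℝ))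
    (μL : Measure (List (Fin M) → Fin A)) [IsProbabilityMeasure μL]
    (hμL : IsLabelingMeasure p μL) (d n : ℕ) (f : (Fin n → Lab M A d) → ℝ) :
    Measurable (fun Ls : Fin n → List (Fin M) → Fin A => f (fun l => trunc d (Ls l))) ∧
    Integrable (fun Ls : Fin n → List (Fin M) → Fin A => f (fun l => trunc d (Ls l)))
      (Measure.pi fun _ : Fin n => μL) ∧
    ∫ Ls, f (fun l => trunc d (Ls l)) ∂(Measure.pi fun _ : Fin n => μL)
      = ((Fintype.card (Lab M A d) : ℝ)^n)⁻¹ * ∑ x, f x := by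
  classical
  set T := (fun (Ls : Fin n → List (Fin M) → Fin A) l => trunc d (Ls l)) with hT
  have hm : ∀ x, MeasurableSet (T ⁻¹' {x}) := fun x => (mu_fiber hA p hp μL hμL d n x).1
  have hfe : (fun Ls : Fin n → List (Fin M) → Fin A => f (fun l => trunc d (Ls l)))
      = fun Ls => ∑ x, (T ⁻¹' {x}).indicator (fun _ => f x) Ls := by
    funext Ls
    simp only [Set.indicator_apply, Set.mem_preimage, Set.mem_singleton_iff]
    rw [Finset.sum_ite_eq]; simp [hT]
  have hi : ∀ x, Integrable ((T ⁻¹' {x}).indicator (fun _ => f x)) (Measure.pi fun _ : Fin n => μL) :=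
    fun x => (integrable_const _).indicator (hm x)
  rw [hfe]
  refine ⟨Finset.measurable_sum _ fun x _ => measurable_const.indicator (hm x),
    integrable_finsetSum _ fun x _ => hi x, ?_⟩
  rw [integral_finsetSum _ fun x _ => hi x, Finset.mul_sum]
  refine Finset.sum_congr rfl fun x _ => ?_
  rw [integral_indicator_const _ (hm x), Measure.real, (mu_fiber hA p hp μL hμL d n x).2]
  simp

/-- truncated size of a family of labelings -/
noncomputable def sd (d : ℕ) {n : ℕ} (Ls : Fin n → List (Fin M) → Fin A) : ℝ :=
  (TT d (Fin n) Ls).ncard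

lemma sd_eq (d : ℕ) {n : ℕ} (Ls : Fin n → List (Fin M) → Fin A) :
    sd d Ls = (SS M A d (Fin n) (fun l => trunc d (Ls l)) : ℝ) := by
  rw [sd, SS_trunc]

lemma sd_mom (hA : 0 < A) (p : Fin A → ℝ) (hp : ∀ j, p j = 1 / (A : ℝ))
    (μL : Measure (List (Fin M) → Fin A)) [IsProbabilityMeasure μL]
    (hμL : IsLabelingMeasure p μL) (d n m : ℕ) :
    Measurable (fun Ls : Fin n → List (Fin M) → Fin A => sd d Ls ^ m) ∧
    Integrable (fun Ls : Fin n → List (Fin M) → Fin A => sd d Ls ^ m)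
      (Measure.pi fun _ : Fin n => μL) ∧
    ∫ Ls : Fin n → List (Fin M) → Fin A, sd d Ls ^ m ∂(Measure.pi fun _ : Fin n => μL)
      = m.factorial * coeff m (RR M A d n) := by
  simp only [sd_eq]
  obtain ⟨h1, h2, h3⟩ := int_trunc hA p hp μL hμL d n (fun x => (SS M A d (Fin n) x : ℝ)^m)
  refine ⟨h1, h2, h3.trans ?_⟩
  have h4 := congrArg (coeff m) (sum_ex M A d hA (Fin n))
  simp only [map_sum, coeff_ex, coeff_C_mul, Fintype.card_fin] at h4
  rw [← Finset.sum_div] at h4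
  have hf : (m.factorial : ℝ) ≠ 0 := by positivity
  have hc : (Fintype.card (Lab M A d) : ℝ)^n ≠ 0 := by
    have : Nonempty (Lab M A d) := ⟨trunc d (fun _ => ⟨0, hA⟩)⟩
    have : 0 < Fintype.card (Lab M A d) := Fintype.card_pos
    positivity
  rw [div_eq_iff hf] at h4
  rw [h4]; field_simp

lemma TT_mono {d d' : ℕ} (h : d ≤ d') (ι : Type) (Ls : ι → List (Fin M) → Fin A) :
    TT d ι Ls ⊆ TT d' ι Ls := fun _ hw => ⟨hw.1, hw.2.trans_le h⟩

lemma sd_mono {n : ℕ} (Ls : Fin n → List (Fin M) → Fin A) : Monotone (fun d => sd d Ls) := by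
  intro d d' h
  exact Nat.cast_le.2 <| Set.ncard_le_ncard (TT_mono h _ _) (TT_finite _ _ _)

lemma TT_sub {n : ℕ} (d : ℕ) (Ls : Fin n → List (Fin M) → Fin A) : TT d (Fin n) Ls ⊆ GTrie Ls :=
  fun _ hw => hw.1

lemma mem_TT {n : ℕ} (d : ℕ) (Ls : Fin n → List (Fin M) → Fin A) (w) (hw : w ∈ GTrie Ls)
    (h : w.length < d) : w ∈ TT d (Fin n) Ls := ⟨hw, h⟩

lemma finset_TT {n : ℕ} (Ls : Fin n → List (Fin M) → Fin A) (t : Finset (List (Fin M × Fin A)))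
    (ht : ↑t ⊆ GTrie Ls) : ∃ d0, ∀ d ≥ d0, ↑t ⊆ TT d (Fin n) Ls := by
  refine ⟨t.sup List.length + 1, fun d hd w hw => mem_TT d Ls w (ht hw) ?_⟩
  have := Finset.le_sup (f := List.length) (Finset.mem_coe.1 hw)
  omega

lemma gtrie_fin_of_bdd {n : ℕ} (Ls : Fin n → List (Fin M) → Fin A) (K : ℝ) (h : ∀ d, sd d Ls ≤ K) :
    (GTrie Ls).Finite := by
  by_contra hinf
  obtain ⟨k, hk⟩ := exists_nat_gt K
  obtain ⟨t, ht, htc⟩ := Set.Infinite.exists_subset_card_eq hinf k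
  obtain ⟨d, hd⟩ := finset_TT Ls t ht
  have h1 := Set.ncard_le_ncard (hd d le_rfl) (TT_finite _ _ _)
  rw [Set.ncard_coe_finset, htc] at h1
  have h2 := h d
  have : (k:ℝ) ≤ sd d Ls := Nat.cast_le.2 h1
  linarith

lemma sd_eventually {n : ℕ} (Ls : Fin n → List (Fin M) → Fin A) (h : (GTrie Ls).Finite) :
    ∀ᶠ d in atTop, sd d Ls = gtrieSize Ls := by
  obtain ⟨d0, hd⟩ := finset_TT Ls h.toFinset (by simp)
  filter_upwards [eventually_ge_atTop d0] with d hdd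
  have := hd d hdd
  rw [Set.Finite.coe_toFinset] at this
  rw [sd, gtrieSize, (TT_sub d Ls).antisymm this]

lemma sd_le {n : ℕ} (d : ℕ) (Ls : Fin n → List (Fin M) → Fin A) (h : (GTrie Ls).Finite) :
    sd d Ls ≤ gtrieSize Ls := by
  exact Nat.cast_le.2 <| Set.ncard_le_ncard (TT_sub d Ls) h

end
end GT


namespace GT
open PowerSeries

section
variable {M A : ℕ}

lemma sd_nonneg {n : ℕ} (d : ℕ) (Ls : Fin n → List (Fin M) → Fin A) : 0 ≤ sd d Ls := Nat.cast_nonneg _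

lemma sd_lint (hM : 0 < M) (hMA : M < A) (p : Fin A → ℝ) (hp : ∀ j, p j = 1 / (A : ℝ))
    (μL : Measure (List (Fin M) → Fin A)) [IsProbabilityMeasure μL]
    (hμL : IsLabelingMeasure p μL) (n m : ℕ) :
    ∫⁻ Ls : Fin n → List (Fin M) → Fin A, ⨆ d, ENNReal.ofReal (sd d Ls ^ m) ∂(Measure.pi fun _ : Fin n => μL) < ⊤ := by
  have hA : 0 < A := by omega
  obtain ⟨K, hK⟩ := RR_bdd hM hMA m n
  rw [lintegral_iSup (f := fun d Ls => ENNReal.ofReal (sd d Ls ^ m))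
    (fun d => (sd_mom hA p hp μL hμL d n m).1.ennreal_ofReal)]
  · refine lt_of_le_of_lt (iSup_le fun d => ?_) (ENNReal.ofReal_lt_top (r := m.factorial * K))
    obtain ⟨_, h2, h3⟩ := sd_mom hA p hp μL hμL d n m
    rw [← ofReal_integral_eq_lintegral_ofReal h2 (ae_of_all _ fun Ls => pow_nonneg (sd_nonneg _ _) _), h3]
    apply ENNReal.ofReal_le_ofReal
    gcongr
    exact (le_abs_self _).trans (hK d)
  · intro d d' h Ls
    apply ENNReal.ofReal_le_ofReal
    have := sd_nonneg d Ls
    gcongr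
    exact sd_mono Ls h

lemma ae_finite (hM : 0 < M) (hMA : M < A) (p : Fin A → ℝ) (hp : ∀ j, p j = 1 / (A : ℝ))
    (μL : Measure (List (Fin M) → Fin A)) [IsProbabilityMeasure μL]
    (hμL : IsLabelingMeasure p μL) (n : ℕ) :
    ∀ᵐ Ls ∂(Measure.pi fun _ : Fin n => μL), (GTrie Ls).Finite := by
  have hA : 0 < A := by omega
  have h1 := sd_lint hM hMA p hp μL hμL n 1
  have h2 := ae_lt_top (Measurable.iSup
    fun d => (sd_mom hA p hp μL hμL d n 1).1.ennreal_ofReal) h1.ne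
  filter_upwards [h2] with Ls hLs
  apply gtrie_fin_of_bdd Ls (⨆ d, ENNReal.ofReal (sd d Ls ^ 1)).toReal
  intro d
  rw [← ENNReal.ofReal_le_iff_le_toReal hLs.ne]
  have := le_iSup (fun d => ENNReal.ofReal (sd d Ls ^ 1)) d
  simpa using this

lemma gt_mom (hM : 0 < M) (hMA : M < A) (p : Fin A → ℝ) (hp : ∀ j, p j = 1 / (A : ℝ))
    (μL : Measure (List (Fin M) → Fin A)) [IsProbabilityMeasure μL]
    (hμL : IsLabelingMeasure p μL) (n m : ℕ) :
    Integrable (fun Ls : Fin n → List (Fin M) → Fin A => gtrieSize Ls ^ m) (Measure.pi fun _ : Fin n => μL) ∧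
    Tendsto (fun d => coeff m (RR M A d n)) atTop
      (𝓝 ((∫ Ls : Fin n → List (Fin M) → Fin A, gtrieSize Ls ^ m ∂(Measure.pi fun _ : Fin n => μL)) / m.factorial)) := by
  have hA : 0 < A := by omega
  have hfin := ae_finite hM hMA p hp μL hμL n
  have hlim : ∀ᵐ Ls ∂(Measure.pi fun _ : Fin n => μL),
      Tendsto (fun d => sd d Ls ^ m) atTop (𝓝 (gtrieSize Ls ^ m)) := by
    filter_upwards [hfin] with Ls h
    apply tendsto_const_nhds.congr'
    filter_upwards [sd_eventually Ls h] with d hd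
    rw [hd]
  have hms : AEStronglyMeasurable (fun Ls : Fin n → List (Fin M) → Fin A => gtrieSize Ls ^ m)
      (Measure.pi fun _ : Fin n => μL) :=
    aestronglyMeasurable_of_tendsto_ae atTop
      (fun d => (sd_mom hA p hp μL hμL d n m).1.aestronglyMeasurable) hlim
  have hInt : Integrable (fun Ls : Fin n → List (Fin M) → Fin A => gtrieSize Ls ^ m)
      (Measure.pi fun _ : Fin n => μL) := by
    refine ⟨hms, ?_⟩
    have hnn : ∀ Ls : Fin n → List (Fin M) → Fin A, 0 ≤ gtrieSize Ls := fun Ls => Nat.cast_nonneg _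
    rw [hasFiniteIntegral_iff_ofReal (ae_of_all _ fun Ls => pow_nonneg (hnn Ls) m)]
    refine lt_of_le_of_lt (lintegral_mono_ae ?_) (sd_lint hM hMA p hp μL hμL n m)
    filter_upwards [hfin] with Ls h
    obtain ⟨d, hd⟩ := (sd_eventually Ls h).exists
    rw [← hd]
    exact le_iSup (fun d => ENNReal.ofReal (sd d Ls ^ m)) d
  refine ⟨hInt, ?_⟩
  have := tendsto_integral_of_dominated_convergence
    (μ := Measure.pi fun _ : Fin n => μL) (F := fun d Ls => sd d Ls ^ m) _
    (fun d => (sd_mom hA p hp μL hμL d n m).1.aestronglyMeasurable) hInt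
    (fun d => by
      filter_upwards [hfin] with Ls h
      have h0 := sd_nonneg d Ls
      rw [Real.norm_of_nonneg (by positivity)]
      gcongr
      exact sd_le d Ls h) hlim
  simp only [(sd_mom hA p hp μL hμL _ n m).2.2] at this
  have h2 := this.div_const (m.factorial : ℝ)
  refine h2.congr fun d => ?_
  field_simp

/-- the limiting generating series -/
noncomputable def RL (μL : Measure (List (Fin M) → Fin A)) (n : ℕ) : PowerSeries ℝ :=
  PowerSeries.mk fun m =>
    (∫ Ls : Fin n → List (Fin M) → Fin A, gtrieSize Ls ^ m ∂(Measure.pi fun _ : Fin n => μL)) / m.factorial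

lemma central (hM : 0 < M) (hMA : M < A) (p : Fin A → ℝ) (hp : ∀ j, p j = 1 / (A : ℝ))
    (μL : Measure (List (Fin M) → Fin A)) [IsProbabilityMeasure μL]
    (hμL : IsLabelingMeasure p μL) (n m : ℕ) (e : ℝ) :
    Integrable (fun Ls : Fin n → List (Fin M) → Fin A => (gtrieSize Ls - e)^m) (Measure.pi fun _ : Fin n => μL) ∧
    m.factorial * coeff m (ex (-e) * RL μL n)
      = ∫ Ls : Fin n → List (Fin M) → Fin A, (gtrieSize Ls - e)^m ∂(Measure.pi fun _ : Fin n => μL) := by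
  have hx : ∀ Ls : Fin n → List (Fin M) → Fin A, (gtrieSize Ls - e)^m
      = ∑ q ∈ Finset.HasAntidiagonal.antidiagonal m, (m.choose q.1 * (-e)^q.1) * gtrieSize Ls ^ q.2 := by
    intro Ls
    rw [sub_eq_neg_add, (Commute.all _ _).add_pow']
    refine Finset.sum_congr rfl fun q _ => ?_
    rw [nsmul_eq_mul]; ring
  have hi : ∀ q ∈ Finset.HasAntidiagonal.antidiagonal m, Integrable (fun Ls : Fin n → List (Fin M) → Fin A =>
      (m.choose q.1 * (-e)^q.1) * gtrieSize Ls ^ q.2) (Measure.pi fun _ : Fin n => μL) :=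
    fun q _ => (gt_mom hM hMA p hp μL hμL n q.2).1.const_mul _
  simp only [hx]
  refine ⟨integrable_finsetSum _ hi, ?_⟩
  rw [integral_finsetSum _ hi, coeff_mul, Finset.mul_sum]
  refine Finset.sum_congr rfl fun q hq => ?_
  rw [integral_const_mul, coeff_ex, RL, coeff_mk]
  rw [Finset.HasAntidiagonal.mem_antidiagonal] at hq
  have := Nat.add_choose_mul_factorial_mul_factorial q.1 q.2
  rw [hq, ← Nat.choose_symm_of_eq_add hq.symm] at this
  rw [← this]
  push_cast
  field_simp

open scoped PowerSeries.WithPiTopology in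
lemma RL_sys (hM : 2 ≤ M) (hMA : M < A) (p : Fin A → ℝ) (hp : ∀ j, p j = 1 / (A : ℝ))
    (μL : Measure (List (Fin M) → Fin A)) [IsProbabilityMeasure μL]
    (hμL : IsLabelingMeasure p μL) : Sys A M (RL μL) := by
  have hM0 : 0 < M := by omega
  have hA : 0 < A := by omega
  have hlim : ∀ n, Tendsto (fun d => RR M A d n) atTop (𝓝 (RL μL n)) := by
    intro n
    rw [PowerSeries.WithPiTopology.tendsto_iff_coeff_tendsto]
    intro m
    rw [RL, coeff_mk]
    exact (gt_mom hM0 hMA p hp μL hμL n m).2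
  have hle : ∀ n ≤ 1, RL μL n = 1 := by
    intro n hn
    have := hlim n
    simp only [RR_le_one hA _ n hn] at this
    exact (tendsto_nhds_unique this tendsto_const_nhds)
  refine ⟨hM, hMA, ?_, ?_, hle 0 (by omega), hle 1 le_rfl, ?_⟩
  · intro n
    rw [← coeff_zero_eq_constantCoeff_apply, RL, coeff_mk]
    simp
  · intro n
    have h1 : Tendsto (fun d => RR M A (d+1) n) atTop (𝓝 (RL μL n)) := (hlim n).comp (tendsto_add_atTop_nat 1)
    refine tendsto_nhds_unique h1 ?_
    simp only [RR, avp]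
    refine Tendsto.const_mul _ (Tendsto.pow (Tendsto.const_mul _ (tendsto_finsetSum _ fun c _ =>
      tendsto_finsetProd _ fun a _ => hlim _)) _)
  · intro n
    have := (central hM0 hMA p hp μL hμL n 2 (coeff 1 (RL μL n))).2
    have h2 : 0 ≤ ∫ Ls : Fin n → List (Fin M) → Fin A, (gtrieSize Ls - (coeff 1 (RL μL n)))^2
        ∂(Measure.pi fun _ : Fin n => μL) := integral_nonneg fun Ls => sq_nonneg _
    rw [← this] at h2
    simpa using h2
end
end GT


namespace GT
open PowerSeries

lemma gm_eq (m : ℕ) (v : ℝ) (hv : 0 ≤ v) :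
    gaussianMoment m * v ^ ((m:ℝ)/2) = m.factorial * coeff m (Gs v) := by
  rw [gaussianMoment, coeff_Gs]
  split_ifs with h
  · obtain ⟨k, rfl⟩ := h
    have e : (k + k)/2 = k := by omega
    have e2 : (((k+k : ℕ):ℝ)/2) = (k:ℝ) := by push_cast; ring
    rw [e, e2, Real.rpow_natCast, div_pow]
    field_simp
  · simp

lemma Lo_littleO {s : ℝ} (hs : 0 < s) {x : ℕ → ℝ} (h : Lo s x) :
    x =o[atTop] (fun n : ℕ => (n:ℝ)^s) := by
  rw [Asymptotics.isLittleO_iff]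
  intro c hc
  obtain ⟨C, hC, h⟩ := h (c/2/2^s) (by positivity)
  have h1 : Tendsto (fun n : ℕ => (n:ℝ)^s) atTop atTop :=
    (tendsto_rpow_atTop hs).comp tendsto_natCast_atTop_atTop
  filter_upwards [h1.eventually_ge_atTop (C/(c/2)), eventually_ge_atTop 1] with n hn hn1
  have hn1' : (1:ℝ) ≤ n := by exact_mod_cast hn1
  rw [Real.norm_eq_abs, Real.norm_of_nonneg (by positivity)]
  rw [div_le_iff₀ (by positivity)] at hn
  have h2 : ((n:ℝ)+1)^s ≤ 2^s * (n:ℝ)^s := by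
    rw [← Real.mul_rpow (by norm_num) (by positivity)]
    exact Real.rpow_le_rpow (by positivity) (by linarith) hs.le
  calc |x n| ≤ c/2/2^s * ((n:ℝ)+1)^s + C := h n
    _ ≤ c/2/2^s * (2^s * (n:ℝ)^s) + C := by gcongr
    _ = c/2 * (n:ℝ)^s + C := by field_simp
    _ ≤ c * (n:ℝ)^s := by linarith

end GT

theorem gtrie_central_moments_uniform_case
    {M A : ℕ} (hM : 2 ≤ M) (hA : 2 ≤ A) (hMA : M < A)
    (p : Fin A → ℝ) (hp : ∀ j, p j = 1 / (A : ℝ))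
    (ρ : ℝ) (hρ : ρ = 1 + Real.logb A M)
    (μL : Measure (List (Fin M) → Fin A)) [IsProbabilityMeasure μL]
    (hμL : IsLabelingMeasure p μL)
    (μ : (n : ℕ) → Measure (Fin n → List (Fin M) → Fin A))
    (hμ : ∀ n, μ n = Measure.pi fun _ => μL)
    (E V : ℕ → ℝ)
    (hE : ∀ n, E n = ∫ Ls, gtrieSize Ls ∂(μ n))
    (hV : ∀ n, V n = variance (fun Ls => gtrieSize Ls) (μ n))
    (CM : ℕ → ℕ → ℝ)
    (hCM : ∀ m n, CM m n = ∫ Ls, (gtrieSize Ls - E n) ^ m ∂(μ n)) :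
    ∀ m : ℕ,
      (fun n : ℕ => CM m n - gaussianMoment m * (V n) ^ ((m : ℝ) / 2))
        =o[atTop] (fun n : ℕ => (n : ℝ) ^ ((m : ℝ) * ρ / 2)) := by
  have hM0 : 0 < M := by omega
  have S := GT.RL_sys hM hMA p hp μL hμL
  have hEe : ∀ n, E n = GT.eR (GT.RL μL) n := by
    intro n
    rw [hE, hμ, GT.eR, GT.RL, PowerSeries.coeff_mk]
    simp
  have hcm : ∀ m n, CM m n = m.factorial * PowerSeries.coeff m (GT.FR (GT.RL μL) n) := by
    intro m n
    rw [hCM, hμ, GT.FR, ← hEe, (GT.central hM0 hMA p hp μL hμL n m (E n)).2]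
  have hVv : ∀ n, V n = GT.vR (GT.RL μL) n := by
    intro n
    have hm : AEMeasurable (fun Ls : Fin n → List (Fin M) → Fin A => gtrieSize Ls) (μ n) := by
      have := (GT.gt_mom hM0 hMA p hp μL hμL n 1).1.aestronglyMeasurable.aemeasurable
      rw [hμ]
      simpa using this
    rw [hV, variance_eq_integral hm, ← hE, ← hCM 2 n, hcm, GT.vR]
    simp
  intro m
  have key : ∀ n, CM m n - gaussianMoment m * (V n) ^ ((m : ℝ) / 2)
      = m.factorial * GT.dl (GT.RL μL) m n := by
    intro n
    rw [hVv, GT.gm_eq m _ (S.vR_nonneg n), hcm, GT.dl]; ring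
  simp only [key]
  rcases Nat.eq_zero_or_pos m with rfl | hm
  · simp only [S.dl0, mul_zero]
    exact Asymptotics.isLittleO_zero _ _
  · have hk := S.kap_pos
    have h := S.main m
    have hr : ρ = 1 + GT.kap A M := hρ
    rw [hr]
    exact (GT.Lo_littleO (by positivity) h).const_mul_left _
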